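/- For every positive integer p there exists a constant A_p > 0, depending only on p, such that: if f(z) = ∑_{k=0}^∞ a_k z^k is analytic and p-valent in the open unit disk D₁ ⊆ ℂ, then for every integer k ≥ p + 1, |a_k| ≤ A_p · (max_{0 ≤ i ≤ p} |a_i|) · k^{2p−1}. -/

import Mathlib

/-!
For a `p`-valent `F` and a weight `k ≥ 0`, the change of variables `w = F(z)` covers each `w` at
most `p` times, so `∫ k(F) |F'|² ≤ p ∫ k`. Combined with the Cauchy–Schwarz inequality this is the
length-area principle, used for `F = f ∘ exp` on rectangles, which correspond to annuli and
half-annuli.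

Normalize so that `|a_i| ≤ 1` for `i ≤ p`.

* Divide `f - c`, for `c` a regular value, by the monic polynomial vanishing at its at most `p`
  zeros. Cauchy's estimates for the reciprocal of the quotient show that `|f|` has bounded minimum
  on every circle of radius at least `1 / 4`. By the length-area principle with `k(w)` comparable to
  `|w|⁻²` on `1 ≤ |w| ≤ b`, the maximum of `|f|` on `|z| ≤ 1 / 4` is then bounded as well.
* Jensen's inequality for `ζ ↦ f(z / (1 + ζ))` about `ζ = 0` bounds `log |f(z)|` by a mean over a
  small circle. On its left half the previous bound, rescaled, compares `|f|` with its maximum on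
  `|w| = |z|`; on its right half the length-area principle in the half-annulus `Re ζ ≥ 0`, of
  angular width `π`, applies. The outcome is `|f(z)| = O((1 - |z|)^(-2p))`.
* The length-area principle with `k(w) = 1 / (|w| + 1)` between the circles of radii `1 - 2⁻ⁿ`
  turns this into a recursion for the means of `|f|`, which are therefore `O((1 - r)^(1 - 2p))`.
  Cauchy's estimate with `1 - r` of order `1 / k` concludes.
-/

open Metric Set

noncomputable section

/-- `f` is `p`-valent in `W`: for every `c ∈ ℂ` the equation `f z = c` has at most `p`
solutions in `W`. -/
def PValentOn (f : ℂ → ℂ) (W : Set ℂ) (p : ℕ) : Prop :=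
  ∀ c : ℂ, ∀ s : Finset ℂ, (∀ t ∈ s, t ∈ W ∧ f t = c) → s.card ≤ p

section

open MeasureTheory Filter Topology Complex
open scoped ENNReal Nat Real

/-! ### Area covered by a `p`-valent map -/

theorem PValentOn.comp {f g : ℂ → ℂ} {U V : Set ℂ} {p : ℕ} (hf : PValentOn f V p)
    (hg : MapsTo g U V) (hinj : InjOn g U) : PValentOn (f ∘ g) U p := by
  classical
  intro c s hs
  rw [← Finset.card_image_of_injOn (hinj.mono fun z hz => (hs z hz).1)]
  refine hf c _ fun w hw => ?_
  obtain ⟨z, hz, rfl⟩ := Finset.mem_image.1 hw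
  exact ⟨hg (hs z hz).1, (hs z hz).2⟩

theorem PValentOn.mono {f : ℂ → ℂ} {U V : Set ℂ} {p : ℕ} (hf : PValentOn f V p) (hUV : U ⊆ V) :
    PValentOn f U p :=
  fun c s hs => hf c s fun z hz => ⟨hUV (hs z hz).1, (hs z hz).2⟩

theorem PValentOn.div_const {f : ℂ → ℂ} {U : Set ℂ} {p : ℕ} (hf : PValentOn f U p) {c : ℂ}
    (hc : c ≠ 0) : PValentOn (fun z => f z / c) U p :=
  fun w s hs => hf (w * c) s fun z hz => ⟨(hs z hz).1, (div_eq_iff hc).1 (hs z hz).2⟩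

theorem PValentOn.tsum_indicator_image_le {f : ℂ → ℂ} {U : Set ℂ} {p : ℕ} (hf : PValentOn f U p)
    {A : ℕ → Set ℂ} (hAU : ∀ n, A n ⊆ U) (hA : Pairwise (Function.onFun Disjoint A)) (w : ℂ) :
    ∑' n, (f '' A n).indicator (fun _ => (1 : ℝ≥0∞)) w ≤ p := by
  classical
  rw [ENNReal.tsum_eq_iSup_sum]
  refine iSup_le fun s => ?_
  simp only [indicator_apply, Finset.sum_boole, Nat.cast_le]
  have preimage_exists : ∀ n : {n // w ∈ f '' A n}, ∃ z ∈ A n, f z = w := fun n => n.2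
  choose z hzA hzw using preimage_exists
  set t := s.subtype fun n => w ∈ f '' A n
  have z_injective : Function.Injective z := fun m n hmn => by
    by_contra hne
    exact disjoint_left.1 (hA fun h => hne (Subtype.ext h)) (hzA m) (hmn ▸ hzA n)
  calc (s.filter fun n => w ∈ f '' A n).card = (t.image z).card := by
        rw [Finset.card_image_of_injective _ z_injective, Finset.card_subtype]
    _ ≤ p := hf w _ fun y hy => by
        obtain ⟨n, -, rfl⟩ := Finset.mem_image.1 hy
        exact ⟨hAU n (hzA n), hzw n⟩

theorem abs_det_restrictScalars_toSpanSingleton (c : ℂ) :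
    |((ContinuousLinearMap.toSpanSingleton ℂ c).restrictScalars ℝ : ℂ →L[ℝ] ℂ).det| =
      ‖c‖ ^ 2 := by
  have det_eq : LinearMap.det (ContinuousLinearMap.toSpanSingleton ℂ c : ℂ →ₗ[ℂ] ℂ) = c := by
    simp [LinearMap.det_ring]
  have norm_det := LinearMap.det_restrictScalars (R := ℝ) (S := ℂ) (A := ℂ)
    (f := (ContinuousLinearMap.toSpanSingleton ℂ c : ℂ →ₗ[ℂ] ℂ))
  rw [det_eq, Algebra.norm_complex_apply, normSq_eq_norm_sq] at norm_det
  exact (congrArg _ norm_det).trans (abs_of_nonneg (by positivity))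

theorem exists_mem_nhds_injOn_of_deriv_ne_zero {F : ℂ → ℂ} {z : ℂ} (hF : AnalyticAt ℂ F z)
    (hd : deriv F z ≠ 0) : ∃ V ∈ 𝓝 z, InjOn F V := by
  have hF' := hF.hasStrictDerivAt.hasStrictFDerivAt_equiv hd
  exact ⟨_, (hF'.toOpenPartialHomeomorph F).open_source.mem_nhds
    hF'.mem_toOpenPartialHomeomorph_source, (hF'.toOpenPartialHomeomorph F).injOn⟩

theorem exists_measurable_partition_injOn {X Y : Type*} [TopologicalSpace X]
    [SecondCountableTopology X] [MeasurableSpace X] [OpensMeasurableSpace X] {f : X → Y}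
    {U : Set X} (hU : MeasurableSet U) (hf : ∀ x ∈ U, ∃ V ∈ 𝓝 x, InjOn f V) :
    ∃ A : ℕ → Set X, (∀ n, MeasurableSet (A n)) ∧ Pairwise (Function.onFun Disjoint A) ∧
      (∀ n, InjOn f (A n)) ∧ ⋃ n, A n = U := by
  have open_nhd : ∀ x : X, ∃ V : Set X, IsOpen V ∧ InjOn f V ∧ (x ∈ U → x ∈ V) := fun x => by
    by_cases hx : x ∈ U
    · obtain ⟨V, hV, hinj⟩ := hf x hx
      exact ⟨interior V, isOpen_interior, hinj.mono interior_subset,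
        fun _ => mem_interior_iff_mem_nhds.2 hV⟩
    · exact ⟨∅, isOpen_empty, injOn_empty f, fun h => (hx h).elim⟩
  choose V hVo hVinj hxV using open_nhd
  obtain ⟨t, -, ht, hcover⟩ := TopologicalSpace.countable_cover_nhdsWithin (f := V) (s := U)
    fun x hx => mem_nhdsWithin_of_mem_nhds ((hVo x).mem_nhds (hxV x hx))
  rcases t.eq_empty_or_nonempty with rfl | htne
  · have hUe : U = ∅ := by simpa using hcover
    exact ⟨fun _ => ∅, fun _ => .empty, fun _ _ _ => disjoint_bot_left, fun _ => injOn_empty f,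
      by simp [hUe]⟩
  obtain ⟨e, rfl⟩ := ht.exists_eq_range htne
  refine ⟨fun n => disjointed (V ∘ e) n ∩ U,
    fun n => (MeasurableSet.disjointed (fun n => (hVo _).measurableSet) n).inter hU,
    fun m n hmn => (disjoint_disjointed _ hmn).mono inter_subset_left inter_subset_left,
    fun n => (hVinj (e n)).mono (inter_subset_left.trans (disjointed_subset _ n)), ?_⟩
  rw [← iUnion_inter, iUnion_disjointed]
  exact inter_eq_right.2 (hcover.trans (biUnion_range (f := e) (g := V)).subset)

theorem lintegral_norm_deriv_sq_mul_comp_eq_image {F : ℂ → ℂ} {A : Set ℂ} (hA : MeasurableSet A)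
    (hF : ∀ z ∈ A, DifferentiableAt ℂ F z) (hinj : InjOn F A) (κ : ℂ → ℝ≥0∞) :
    MeasurableSet (F '' A) ∧
      ∫⁻ z in A, ENNReal.ofReal (‖deriv F z‖ ^ 2) * κ (F z) = ∫⁻ w in F '' A, κ w := by
  have hasFDeriv : ∀ z ∈ A, HasFDerivWithinAt F
      ((ContinuousLinearMap.toSpanSingleton ℂ (deriv F z)).restrictScalars ℝ) A z :=
    fun z hz => ((hF z hz).hasDerivAt.hasFDerivAt.restrictScalars ℝ).hasFDerivWithinAt
  refine ⟨measurable_image_of_fderivWithin hA hasFDeriv hinj, ?_⟩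
  rw [lintegral_image_eq_lintegral_abs_det_fderiv_mul volume hA hasFDeriv hinj]
  simp only [abs_det_restrictScalars_toSpanSingleton]

theorem lintegral_norm_deriv_sq_mul_comp_le {F : ℂ → ℂ} {U : Set ℂ} {p : ℕ} (hU : IsOpen U)
    (hF : DifferentiableOn ℂ F U) (hp : PValentOn F U p) {κ : ℂ → ℝ≥0∞} (hκ : Measurable κ) :
    ∫⁻ z in U, ENNReal.ofReal (‖deriv F z‖ ^ 2) * κ (F z) ≤ p * ∫⁻ w, κ w := by
  set J : ℂ → ℝ≥0∞ := fun z => ENNReal.ofReal (‖deriv F z‖ ^ 2) * κ (F z)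
  set U' : Set ℂ := U ∩ deriv F ⁻¹' {0}ᶜ
  have hU' : IsOpen U' := (hF.deriv hU).continuousOn.isOpen_inter_preimage hU isOpen_compl_singleton
  have U'_sub : U' ⊆ U := inter_subset_left
  have indicator_J : U.indicator J = U'.indicator J := by
    ext z
    by_cases hzU : z ∈ U <;> by_cases hz : deriv F z = 0 <;> simp [U', J, hzU, hz]
  obtain ⟨A, hAm, hAd, hAinj, hAU'⟩ := exists_measurable_partition_injOn hU'.measurableSet
    fun z hz => exists_mem_nhds_injOn_of_deriv_ne_zero (hF.analyticAt (hU.mem_nhds hz.1)) hz.2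
  have hAU : ∀ n, A n ⊆ U := fun n => (subset_iUnion A n).trans (hAU' ▸ U'_sub)
  have area_piece := fun n => lintegral_norm_deriv_sq_mul_comp_eq_image (hAm n)
    (fun z hz => hF.differentiableAt (hU.mem_nhds (hAU n hz))) (hAinj n) κ
  calc ∫⁻ z in U, J z = ∫⁻ z in U', J z := by
        rw [← lintegral_indicator hU.measurableSet, ← lintegral_indicator hU'.measurableSet,
          indicator_J]
    _ = ∑' n, ∫⁻ z in A n, J z := by rw [← hAU', lintegral_iUnion hAm hAd]
    _ = ∑' n, ∫⁻ w, (F '' A n).indicator (fun _ => (1 : ℝ≥0∞)) w * κ w := by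
        refine tsum_congr fun n => ?_
        rw [(area_piece n).2, ← lintegral_indicator (area_piece n).1]
        exact lintegral_congr fun w => by by_cases hw : w ∈ F '' A n <;> simp [hw]
    _ = ∫⁻ w, ∑' n, (F '' A n).indicator (fun _ => (1 : ℝ≥0∞)) w * κ w :=
        (lintegral_tsum fun n =>
          ((measurable_const.indicator (area_piece n).1).mul hκ).aemeasurable).symm
    _ ≤ ∫⁻ w, p * κ w := lintegral_mono fun w => by
        rw [ENNReal.tsum_mul_right]
        gcongr
        exact hp.tsum_indicator_image_le hAU hAd w
    _ = p * ∫⁻ w, κ w := lintegral_const_mul _ hκ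

theorem setIntegral_comp_mul_norm_deriv_sq_le {F : ℂ → ℂ} {U K : Set ℂ} {p : ℕ}
    (hU : IsOpen U) (hF : DifferentiableOn ℂ F U) (hK : IsCompact K) (hKU : K ⊆ U)
    (hfr : interior K =ᵐ[volume] K) (hp : PValentOn F (interior K) p)
    {k : ℂ → ℝ} (hk : Continuous k) (hk0 : 0 ≤ k) {T : Set ℂ} (hT : MeasurableSet T)
    (hFT : MapsTo F K T) {V : ℝ} (hV0 : 0 ≤ V)
    (hV : ∫⁻ w in T, ENNReal.ofReal (k w) ≤ ENNReal.ofReal V) :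
    ∫ z in K, k (F z) * ‖deriv F z‖ ^ 2 ≤ p * V := by
  have hcont : ContinuousOn (fun z => k (F z) * ‖deriv F z‖ ^ 2) K :=
    ((hk.comp_continuousOn hF.continuousOn).mul
      ((hF.deriv hU).continuousOn.norm.pow 2)).mono hKU
  have hint : IntegrableOn (fun z => k (F z) * ‖deriv F z‖ ^ 2) (interior K) :=
    (hcont.integrableOn_compact hK).mono_set interior_subset
  rw [← setIntegral_congr_set hfr, integral_eq_lintegral_of_nonneg_ae
    (Eventually.of_forall fun z => mul_nonneg (hk0 _) (by positivity)) hint.aestronglyMeasurable]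
  refine ENNReal.toReal_le_of_le_ofReal (by positivity) ?_
  calc ∫⁻ z in interior K, ENNReal.ofReal (k (F z) * ‖deriv F z‖ ^ 2)
      = ∫⁻ z in interior K, ENNReal.ofReal (‖deriv F z‖ ^ 2) *
          T.indicator (fun w => ENNReal.ofReal (k w)) (F z) := by
        refine setLIntegral_congr_fun isOpen_interior.measurableSet fun z hz => ?_
        simp only [indicator_of_mem (hFT (interior_subset hz))]
        rw [mul_comm, ENNReal.ofReal_mul (by positivity)]
    _ ≤ p * ∫⁻ w, T.indicator (fun w => ENNReal.ofReal (k w)) w :=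
        lintegral_norm_deriv_sq_mul_comp_le isOpen_interior
          (hF.mono (interior_subset.trans hKU)) hp (hk.measurable.ennreal_ofReal.indicator hT)
    _ ≤ ENNReal.ofReal (p * V) := by
        rw [lintegral_indicator hT, ENNReal.ofReal_mul (by positivity), ENNReal.ofReal_natCast]
        gcongr

/-! ### Radial weights -/

theorem lintegral_fun_norm_complex {g : ℝ → ℝ≥0∞} (hg : Measurable g) :
    ∫⁻ w : ℂ, g ‖w‖ = ENNReal.ofReal (2 * π) * ∫⁻ s in Ioi (0 : ℝ), ENNReal.ofReal s * g s := by
  have norm_polar : ∀ q ∈ polarCoord.target,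
      ENNReal.ofReal q.1 • g ‖Complex.polarCoord.symm q‖ = (ENNReal.ofReal q.1 * g q.1) * 1 :=
    fun q hq => by
      have hq : 0 < q.1 := by simpa using (polarCoord_target ▸ hq : q ∈ Ioi 0 ×ˢ Ioo (-π) π).1
      rw [Complex.norm_polarCoord_symm, abs_of_pos hq, smul_eq_mul, mul_one]
  rw [← Complex.lintegral_comp_polarCoord_symm,
    setLIntegral_congr_fun polarCoord.open_target.measurableSet norm_polar, polarCoord_target,
    Measure.volume_eq_prod, ← Measure.prod_restrict,
    lintegral_prod_mul (f := fun s => ENNReal.ofReal s * g s) (g := fun _ => 1)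
      (ENNReal.measurable_ofReal.mul hg).aemeasurable aemeasurable_const,
    setLIntegral_one, Real.volume_Ioo, mul_comm, sub_neg_eq_add, two_mul]

theorem lintegral_closedBall_one_div_norm_add_one_le (M : ℝ) :
    ∫⁻ w : ℂ in closedBall 0 M, ENNReal.ofReal (1 / (‖w‖ + 1)) ≤ ENNReal.ofReal (2 * π * M) := by
  set g : ℝ → ℝ≥0∞ := (Iic M).indicator fun s => ENNReal.ofReal (1 / (s + 1))
  have hg : Measurable g := Measurable.indicator (by fun_prop) measurableSet_Iic
  have indicator_eq : ∀ w : ℂ,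
      (closedBall 0 M).indicator (fun w => ENNReal.ofReal (1 / (‖w‖ + 1))) w = g ‖w‖ := fun w => by
    by_cases hw : ‖w‖ ≤ M <;> simp [g, indicator, hw]
  rw [← lintegral_indicator measurableSet_closedBall, lintegral_congr indicator_eq,
    lintegral_fun_norm_complex hg, ENNReal.ofReal_mul (p := 2 * π) (by positivity)]
  gcongr
  calc ∫⁻ s in Ioi (0 : ℝ), ENNReal.ofReal s * g s
      ≤ ∫⁻ s in Ioi (0 : ℝ), (Iic M).indicator (fun _ => 1) s := by
        refine setLIntegral_mono' measurableSet_Ioi fun s (hs : 0 < s) => ?_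
        by_cases hsM : s ≤ M
        · simp only [g, indicator, mem_Iic, hsM, if_true]
          rw [← ENNReal.ofReal_mul hs.le, ENNReal.ofReal_le_one, mul_one_div,
            div_le_one (by positivity)]
          linarith
        · simp [g, indicator, hsM]
    _ = ENNReal.ofReal M := by
        rw [lintegral_indicator measurableSet_Iic, setLIntegral_one,
          Measure.restrict_apply measurableSet_Iic, inter_comm, Ioi_inter_Iic, Real.volume_Ioc,
          sub_zero]

/-- A smooth substitute for `log s` on `1 ≤ s ≤ b`, normalised to tend to `0` at infinity; outside
this range it varies by a bounded amount only, so that the gradient of `truncatedLog b ‖w‖` is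
square integrable over the plane. -/
def truncatedLog (b s : ℝ) : ℝ := (Real.log (1 + s ^ 2) - Real.log (b ^ 2 + s ^ 2)) / 2

/-- The derivative of `truncatedLog b`. -/
def truncatedLogDeriv (b s : ℝ) : ℝ := s / (1 + s ^ 2) - s / (b ^ 2 + s ^ 2)

section truncatedLog

variable {b : ℝ}

theorem hasDerivAt_log_add_sq {a : ℝ} (ha : 0 < a) (s : ℝ) :
    HasDerivAt (fun s => Real.log (a + s ^ 2)) (2 * s / (a + s ^ 2)) s := by
  simpa using ((hasDerivAt_pow 2 s).const_add a).log (by positivity)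

theorem hasDerivAt_truncatedLog (hb : 0 < b) (s : ℝ) :
    HasDerivAt (truncatedLog b) (truncatedLogDeriv b s) s := by
  refine (((hasDerivAt_log_add_sq one_pos s).sub
    (hasDerivAt_log_add_sq (sq_pos_of_pos hb) s)).div_const 2).congr_deriv ?_
  rw [truncatedLogDeriv]
  ring

theorem continuous_truncatedLogDeriv (hb : 0 < b) : Continuous (truncatedLogDeriv b) := by
  unfold truncatedLogDeriv
  exact (continuous_id.div (by fun_prop) fun s => by positivity).sub
    (continuous_id.div (by fun_prop) fun s => by positivity)

theorem truncatedLogDeriv_nonneg (hb : 1 ≤ b) {s : ℝ} (hs : 0 ≤ s) :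
    0 ≤ truncatedLogDeriv b s := by
  rw [truncatedLogDeriv, sub_nonneg]
  gcongr
  exact one_le_pow₀ hb

theorem mul_truncatedLogDeriv_le_one (hb : 0 < b) {s : ℝ} (hs : 0 ≤ s) :
    s * truncatedLogDeriv b s ≤ 1 := by
  have first_le : s * (s / (1 + s ^ 2)) ≤ 1 := by
    rw [← mul_div_assoc, div_le_one (by positivity)]
    linarith
  have second_nonneg : 0 ≤ s * (s / (b ^ 2 + s ^ 2)) := by positivity
  rw [truncatedLogDeriv, mul_sub]
  linarith

theorem monotoneOn_truncatedLog (hb : 1 ≤ b) : MonotoneOn (truncatedLog b) (Ici 0) := by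
  have hderiv := hasDerivAt_truncatedLog (one_pos.trans_le hb)
  refine monotoneOn_of_deriv_nonneg (convex_Ici 0)
    (fun s _ => (hderiv s).continuousAt.continuousWithinAt)
    (fun s _ => (hderiv s).differentiableAt.differentiableWithinAt) fun s hs => ?_
  rw [(hderiv s).deriv]
  exact truncatedLogDeriv_nonneg hb (interior_subset hs)

theorem tendsto_truncatedLog_atTop (hb : 0 < b) : Tendsto (truncatedLog b) atTop (𝓝 0) := by
  have log_eq : truncatedLog b = fun s => Real.log (1 + (1 - b ^ 2) / (b ^ 2 + s ^ 2)) / 2 := by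
    ext s
    rw [truncatedLog, ← Real.log_div (by positivity) (by positivity)]
    congr 2
    field_simp
    ring
  have tendsto_one : Tendsto (fun s : ℝ => 1 + (1 - b ^ 2) / (b ^ 2 + s ^ 2)) atTop (𝓝 1) := by
    simpa using (tendsto_const_nhds.div_atTop (tendsto_atTop_add_const_left _ (b ^ 2)
      (tendsto_pow_atTop (α := ℝ) two_ne_zero))).const_add (1 : ℝ)
  rw [log_eq]
  simpa using (tendsto_one.log one_ne_zero).div_const 2

theorem lintegral_truncatedLogDeriv_norm_sq_le (hb : 1 ≤ b) :
    ∫⁻ w : ℂ, ENNReal.ofReal (truncatedLogDeriv b ‖w‖ ^ 2) ≤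
      ENNReal.ofReal (2 * π * Real.log b) := by
  have hb0 : 0 < b := one_pos.trans_le hb
  have hcont := (hasDerivAt_truncatedLog hb0 0).continuousAt.continuousWithinAt (s := Ici 0)
  have hderiv := fun s (_ : s ∈ Ioi (0 : ℝ)) => hasDerivAt_truncatedLog hb0 s
  have hnonneg := fun s (hs : s ∈ Ioi (0 : ℝ)) => truncatedLogDeriv_nonneg hb (le_of_lt hs)
  have hlim := tendsto_truncatedLog_atTop hb0
  have integral_eq : ∫ s in Ioi 0, truncatedLogDeriv b s = Real.log b := by
    rw [integral_Ioi_of_hasDerivAt_of_nonneg hcont hderiv hnonneg hlim, truncatedLog]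
    simp [neg_div]
  rw [lintegral_fun_norm_complex (g := fun s => ENNReal.ofReal (truncatedLogDeriv b s ^ 2))
    ((continuous_truncatedLogDeriv hb0).pow 2).measurable.ennreal_ofReal,
    ENNReal.ofReal_mul (p := 2 * π) (by positivity), ← integral_eq,
    ofReal_integral_eq_lintegral_ofReal (integrableOn_Ioi_deriv_of_nonneg hcont hderiv hnonneg hlim)
      ((ae_restrict_iff' measurableSet_Ioi).2 (Eventually.of_forall hnonneg))]
  refine mul_le_mul' le_rfl (setLIntegral_mono' measurableSet_Ioi fun s hs => ?_)
  rw [← ENNReal.ofReal_mul (le_of_lt hs), sq, ← mul_assoc]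
  exact ENNReal.ofReal_le_ofReal (mul_le_of_le_one_left (hnonneg s hs)
    (mul_truncatedLogDeriv_le_one hb0 (le_of_lt hs)))

theorem le_truncatedLog_sub_truncatedLog (hb : 1 ≤ b) {s t : ℝ} (hs : 0 ≤ s) (hsb : s ≤ b)
    (ht : 0 ≤ t) (ht1 : t ≤ 1) :
    Real.log (1 + s ^ 2) / 2 - Real.log 2 ≤ truncatedLog b s - truncatedLog b t := by
  have : 0 < b := one_pos.trans_le hb
  have log_at_s : Real.log (b ^ 2 + s ^ 2) ≤ Real.log 2 + Real.log (b ^ 2) := by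
    rw [← Real.log_mul two_ne_zero (by positivity)]
    exact Real.log_le_log (by positivity) (by nlinarith)
  have log_at_t : Real.log (1 + t ^ 2) ≤ Real.log 2 :=
    Real.log_le_log (by positivity) (by nlinarith)
  have log_b : Real.log (b ^ 2) ≤ Real.log (b ^ 2 + t ^ 2) :=
    Real.log_le_log (by positivity) (by nlinarith)
  rw [truncatedLog, truncatedLog]
  linarith

theorem log_le_half_log_one_add_sq (s : ℝ) : Real.log s ≤ Real.log (1 + s ^ 2) / 2 := by
  rcases eq_or_ne s 0 with rfl | hs
  · simp
  · have : Real.log (s ^ 2) ≤ Real.log (1 + s ^ 2) :=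
      Real.log_le_log (by positivity) (by linarith)
    rw [Real.log_pow] at this
    push_cast at this
    linarith

theorem log_sub_log_two_le_truncatedLog_sub (hb : 1 ≤ b) {s t : ℝ} (hs : b ≤ s)
    (ht : 0 ≤ t) (ht1 : t ≤ 1) :
    Real.log b - Real.log 2 ≤ truncatedLog b s - truncatedLog b t := by
  have hb0 : 0 ≤ b := zero_le_one.trans hb
  have at_b := le_truncatedLog_sub_truncatedLog hb hb0 le_rfl ht ht1
  have mono := monotoneOn_truncatedLog hb hb0 (hb0.trans hs) hs
  linarith [log_le_half_log_one_add_sq b]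

theorem abs_truncatedLog_norm_sub_le_integral {E : Type*} [NormedAddCommGroup E]
    [InnerProductSpace ℝ E] (hb : 1 ≤ b) {c c' : ℝ → E} {t₀ t₁ : ℝ} (ht : t₀ ≤ t₁)
    (hc : ∀ t ∈ Icc t₀ t₁, HasDerivAt c (c' t) t) (hc' : ContinuousOn c' (Icc t₀ t₁)) :
    |truncatedLog b ‖c t₁‖ - truncatedLog b ‖c t₀‖| ≤
      ∫ t in t₀..t₁, truncatedLogDeriv b ‖c t‖ * ‖c' t‖ := by
  have hb0 : 0 < b := one_pos.trans_le hb
  have hcont : ContinuousOn c (Icc t₀ t₁) := fun t ht => (hc t ht).continuousAt.continuousWithinAt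
  have hderiv : ∀ t ∈ Icc t₀ t₁, HasDerivAt (fun t => truncatedLog b ‖c t‖)
      (inner ℝ (c t) (c' t) * (1 / (1 + ‖c t‖ ^ 2) - 1 / (b ^ 2 + ‖c t‖ ^ 2))) t := fun t ht => by
    refine (((((hc t ht).norm_sq.const_add 1).log (by positivity)).sub
      (((hc t ht).norm_sq.const_add (b ^ 2)).log (by positivity))).div_const 2).congr_deriv ?_
    ring
  refine norm_sub_le_integral_of_norm_deriv_le_of_le ht
    (fun t ht => (hderiv t ht).continuousAt.continuousWithinAt)
    (fun t ht => (hderiv t (Ioo_subset_Icc_self ht)).differentiableAt.differentiableWithinAt)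
    (Eventually.of_forall fun t ht => ?_) (ContinuousOn.intervalIntegrable_of_Icc ht
      (((continuous_truncatedLogDeriv hb0).comp_continuousOn hcont.norm).mul hc'.norm))
  have factor_nonneg : 0 ≤ 1 / (1 + ‖c t‖ ^ 2) - 1 / (b ^ 2 + ‖c t‖ ^ 2) := by
    rw [sub_nonneg]
    gcongr
    exact one_le_pow₀ hb
  rw [(hderiv t (Ioo_subset_Icc_self ht)).deriv, norm_mul, Real.norm_of_nonneg factor_nonneg]
  calc |inner ℝ (c t) (c' t)| * (1 / (1 + ‖c t‖ ^ 2) - 1 / (b ^ 2 + ‖c t‖ ^ 2))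
      ≤ ‖c t‖ * ‖c' t‖ * (1 / (1 + ‖c t‖ ^ 2) - 1 / (b ^ 2 + ‖c t‖ ^ 2)) := by
        gcongr
        exact abs_real_inner_le_norm _ _
    _ = truncatedLogDeriv b ‖c t‖ * ‖c' t‖ := by rw [truncatedLogDeriv]; ring

theorem truncatedLog_norm_sub_le_integral {E : Type*} [NormedAddCommGroup E]
    [InnerProductSpace ℝ E] (hb : 1 ≤ b) {c c' : ℝ → E} {t₀ t₁ : ℝ}
    (hc : ∀ t ∈ Icc t₀ t₁, HasDerivAt c (c' t) t) (hc' : ContinuousOn c' (Icc t₀ t₁))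
    {s t : ℝ} (hs : s ∈ Icc t₀ t₁) (ht : t ∈ Icc t₀ t₁) :
    truncatedLog b ‖c t‖ - truncatedLog b ‖c s‖ ≤
      ∫ t in t₀..t₁, truncatedLogDeriv b ‖c t‖ * ‖c' t‖ := by
  have hcont : ContinuousOn c (Icc t₀ t₁) := fun t ht => (hc t ht).continuousAt.continuousWithinAt
  have hint : IntervalIntegrable (fun t => truncatedLogDeriv b ‖c t‖ * ‖c' t‖) volume t₀ t₁ :=
    ContinuousOn.intervalIntegrable_of_Icc (hs.1.trans hs.2)
      (((continuous_truncatedLogDeriv (one_pos.trans_le hb)).comp_continuousOn hcont.norm).mul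
        hc'.norm)
  have ordered : ∀ {u v : ℝ}, u ∈ Icc t₀ t₁ → v ∈ Icc t₀ t₁ → u ≤ v →
      |truncatedLog b ‖c v‖ - truncatedLog b ‖c u‖| ≤
        ∫ t in t₀..t₁, truncatedLogDeriv b ‖c t‖ * ‖c' t‖ := fun {u v} hu hv huv => by
    have hsub : Icc u v ⊆ Icc t₀ t₁ := Icc_subset_Icc hu.1 hv.2
    exact (abs_truncatedLog_norm_sub_le_integral hb huv (fun t ht => hc t (hsub ht))
      (hc'.mono hsub)).trans (intervalIntegral.integral_mono_interval hu.1 huv hv.2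
        (Eventually.of_forall fun t => mul_nonneg
          (truncatedLogDeriv_nonneg hb (norm_nonneg _)) (norm_nonneg _)) hint)
  rcases le_total s t with hst | hts
  · exact (le_abs_self _).trans (ordered hs ht hst)
  · exact (le_abs_self _).trans (abs_sub_comm (truncatedLog b ‖c s‖) _ ▸ ordered ht hs hts)

end truncatedLog

/-! ### Integrals over rectangles -/

theorem sq_setIntegral_mul_le {X : Type*} [TopologicalSpace X] [T2Space X] [MeasurableSpace X]
    [OpensMeasurableSpace X] {μ : Measure X} [IsFiniteMeasureOnCompacts μ] {K : Set X}
    (hK : IsCompact K) {u v : X → ℝ} (hu : ContinuousOn u K) (hv : ContinuousOn v K) :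
    (∫ z in K, u z * v z ∂μ) ^ 2 ≤ (∫ z in K, u z ^ 2 ∂μ) * ∫ z in K, v z ^ 2 ∂μ := by
  have huu : IntegrableOn (fun z => u z ^ 2) K μ := (hu.pow 2).integrableOn_compact hK
  have huv : IntegrableOn (fun z => u z * v z) K μ := (hu.mul hv).integrableOn_compact hK
  have hvv : IntegrableOn (fun z => v z ^ 2) K μ := (hv.pow 2).integrableOn_compact hK
  have discrim_nonpos := discrim_le_zero (a := ∫ z in K, v z ^ 2 ∂μ)
    (b := 2 * ∫ z in K, u z * v z ∂μ) (c := ∫ z in K, u z ^ 2 ∂μ) fun x => by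
    calc (0 : ℝ) ≤ ∫ z in K, (u z + x * v z) ^ 2 ∂μ := integral_nonneg fun z => sq_nonneg _
      _ = ∫ z in K, (u z ^ 2 + 2 * x * (u z * v z) + x ^ 2 * v z ^ 2) ∂μ :=
          integral_congr_ae (Eventually.of_forall fun z => by ring)
      _ = _ := by
          rw [integral_add (by exact huu.add (huv.const_mul _)) (hvv.const_mul _),
            integral_add huu (huv.const_mul _), integral_const_mul, integral_const_mul]
          ring
  rw [discrim] at discrim_nonpos
  linarith

section Rectangle

variable {x₀ x₁ y₀ y₁ : ℝ}

theorem add_mul_I_mem_reProdIm {s t : Set ℝ} {x y : ℝ} (hx : x ∈ s) (hy : y ∈ t) :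
    (x + y * I : ℂ) ∈ s ×ℂ t := by
  simpa [mem_reProdIm] using ⟨hx, hy⟩

theorem interior_reProdIm_Icc_ae_eq :
    interior (Icc x₀ x₁ ×ℂ Icc y₀ y₁) =ᵐ[volume] Icc x₀ x₁ ×ℂ Icc y₀ y₁ := by
  have prod_ae : (Ioo x₀ x₁ ×ˢ Ioo y₀ y₁ : Set (ℝ × ℝ)) =ᵐ[volume] Icc x₀ x₁ ×ˢ Icc y₀ y₁ := by
    rw [Measure.volume_eq_prod]
    exact Measure.set_prod_ae_eq Ioo_ae_eq_Icc Ioo_ae_eq_Icc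
  rw [interior_reProdIm, interior_Icc, interior_Icc]
  exact volume_preserving_equiv_real_prod.quasiMeasurePreserving.preimage_ae_eq prod_ae

theorem setIntegral_reProdIm (H : ℂ → ℝ) (s t : Set ℝ) :
    ∫ z in s ×ℂ t, H z = ∫ q in s ×ˢ t, H (q.1 + q.2 * I) := by
  rw [← volume_preserving_equiv_real_prod.setIntegral_preimage_emb
    measurableEquivRealProd.measurableEmbedding]
  congr 1 with z
  simp

theorem volume_real_reProdIm_Icc (hx : x₀ ≤ x₁) (hy : y₀ ≤ y₁) :
    volume.real (Icc x₀ x₁ ×ℂ Icc y₀ y₁) = (x₁ - x₀) * (y₁ - y₀) := by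
  have := setIntegral_reProdIm (fun _ => 1) (Icc x₀ x₁) (Icc y₀ y₁)
  simpa [-Icc_prod_Icc, Measure.volume_eq_prod, measureReal_prod_prod, hx, hy] using this

variable {H : ℂ → ℝ}

theorem integrableOn_prod_of_continuousOn_reProdIm
    (hH : ContinuousOn H (Icc x₀ x₁ ×ℂ Icc y₀ y₁)) :
    IntegrableOn (fun q : ℝ × ℝ => H (q.1 + q.2 * I)) (Icc x₀ x₁ ×ˢ Icc y₀ y₁)
      (volume.prod volume) := by
  have hcont : ContinuousOn (fun q : ℝ × ℝ => H (q.1 + q.2 * I)) (Icc x₀ x₁ ×ˢ Icc y₀ y₁) :=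
    hH.comp (by fun_prop) fun q hq => add_mul_I_mem_reProdIm hq.1 hq.2
  exact hcont.integrableOn_compact (isCompact_Icc.prod isCompact_Icc)

theorem integral_vertical_le_setIntegral_reProdIm (hx : x₀ ≤ x₁) (hy : y₀ ≤ y₁)
    (hH : ContinuousOn H (Icc x₀ x₁ ×ℂ Icc y₀ y₁)) {D : ℝ → ℝ}
    (hD : IntervalIntegrable D volume x₀ x₁)
    (hDH : ∀ x ∈ Icc x₀ x₁, D x ≤ ∫ y in y₀..y₁, H (x + y * I)) :
    ∫ x in x₀..x₁, D x ≤ ∫ z in Icc x₀ x₁ ×ℂ Icc y₀ y₁, H z := by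
  have hint := integrableOn_prod_of_continuousOn_reProdIm hH
  rw [setIntegral_reProdIm, Measure.volume_eq_prod, setIntegral_prod _ hint,
    intervalIntegral.integral_of_le hx, ← integral_Icc_eq_integral_Ioc]
  rw [IntegrableOn, ← Measure.prod_restrict] at hint
  refine setIntegral_mono_on ((intervalIntegrable_iff_integrableOn_Icc_of_le hx).1 hD)
    hint.integral_prod_left measurableSet_Icc fun x hxI => (hDH x hxI).trans_eq ?_
  rw [intervalIntegral.integral_of_le hy, integral_Icc_eq_integral_Ioc]

theorem integral_horizontal_le_setIntegral_reProdIm (hx : x₀ ≤ x₁) (hy : y₀ ≤ y₁)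
    (hH : ContinuousOn H (Icc x₀ x₁ ×ℂ Icc y₀ y₁)) {D : ℝ → ℝ}
    (hD : IntervalIntegrable D volume y₀ y₁)
    (hDH : ∀ y ∈ Icc y₀ y₁, D y ≤ ∫ x in x₀..x₁, H (x + y * I)) :
    ∫ y in y₀..y₁, D y ≤ ∫ z in Icc x₀ x₁ ×ℂ Icc y₀ y₁, H z := by
  have hint := integrableOn_prod_of_continuousOn_reProdIm hH
  rw [setIntegral_reProdIm, Measure.volume_eq_prod, ← setIntegral_prod_swap,
    setIntegral_prod _ (by exact hint.swap),
    intervalIntegral.integral_of_le hy, ← integral_Icc_eq_integral_Ioc]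
  rw [IntegrableOn, ← Measure.prod_restrict] at hint
  refine setIntegral_mono_on ((intervalIntegrable_iff_integrableOn_Icc_of_le hy).1 hD)
    hint.integral_prod_right measurableSet_Icc fun y hyI => (hDH y hyI).trans_eq ?_
  rw [intervalIntegral.integral_of_le hx, integral_Icc_eq_integral_Ioc]
  rfl

end Rectangle

section VerticalHorizontal

variable {F : ℂ → ℂ} {x y : ℝ}

theorem hasDerivAt_comp_vertical (hF : DifferentiableAt ℂ F (x + y * I)) :
    HasDerivAt (fun t : ℝ => F (x + t * I)) (deriv F (x + y * I) * I) y := by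
  have line : HasDerivAt (fun t : ℝ => (x + t * I : ℂ)) I y := by
    simpa using ((ofRealCLM.hasDerivAt (x := y)).mul_const I).const_add (x : ℂ)
  exact HasDerivAt.comp (𝕜' := ℂ) y hF.hasDerivAt line

theorem hasDerivAt_comp_horizontal (hF : DifferentiableAt ℂ F (x + y * I)) :
    HasDerivAt (fun t : ℝ => F (t + y * I)) (deriv F (x + y * I)) x := by
  have line : HasDerivAt (fun t : ℝ => (t + y * I : ℂ)) 1 x :=
    (ofRealCLM.hasDerivAt (x := x)).add_const _
  exact (HasDerivAt.comp (𝕜' := ℂ) x hF.hasDerivAt line).congr_deriv (mul_one _)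

end VerticalHorizontal

/-! ### The length-area principle -/

section LengthArea

variable {F : ℂ → ℂ} {U : Set ℂ} {p : ℕ} {x₀ x₁ y₀ y₁ : ℝ}

theorem setIntegral_reProdIm_comp_mul_norm_deriv_sq_le (hU : IsOpen U)
    (hF : DifferentiableOn ℂ F U) (hRU : Icc x₀ x₁ ×ℂ Icc y₀ y₁ ⊆ U)
    (hp : PValentOn F (Ioo x₀ x₁ ×ℂ Ioo y₀ y₁) p) {k : ℂ → ℝ} (hk : Continuous k)
    (hk0 : 0 ≤ k) {T : Set ℂ} (hT : MeasurableSet T) (hFT : MapsTo F (Icc x₀ x₁ ×ℂ Icc y₀ y₁) T)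
    {V : ℝ} (hV0 : 0 ≤ V) (hV : ∫⁻ w in T, ENNReal.ofReal (k w) ≤ ENNReal.ofReal V) :
    ∫ z in Icc x₀ x₁ ×ℂ Icc y₀ y₁, k (F z) * ‖deriv F z‖ ^ 2 ≤ p * V := by
  refine setIntegral_comp_mul_norm_deriv_sq_le hU hF (isCompact_Icc.reProdIm isCompact_Icc) hRU
    interior_reProdIm_Icc_ae_eq ?_ hk hk0 hT hFT hV0 hV
  rwa [interior_reProdIm, interior_Icc, interior_Icc]

variable {b : ℝ}

theorem continuousOn_truncatedLogDeriv_mul_norm_deriv (hb : 0 < b) (hU : IsOpen U)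
    (hF : DifferentiableOn ℂ F U) :
    ContinuousOn (fun z => truncatedLogDeriv b ‖F z‖ * ‖deriv F z‖) U :=
  ((continuous_truncatedLogDeriv hb).comp_continuousOn hF.continuousOn.norm).mul
    (hF.deriv hU).continuousOn.norm

theorem setIntegral_truncatedLogDeriv_mul_norm_deriv_le (hb : 1 ≤ b) (hU : IsOpen U)
    (hF : DifferentiableOn ℂ F U) (hx : x₀ ≤ x₁) (hy : y₀ ≤ y₁)
    (hRU : Icc x₀ x₁ ×ℂ Icc y₀ y₁ ⊆ U) (hp : PValentOn F (Ioo x₀ x₁ ×ℂ Ioo y₀ y₁) p) :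
    ∫ z in Icc x₀ x₁ ×ℂ Icc y₀ y₁, truncatedLogDeriv b ‖F z‖ * ‖deriv F z‖ ≤
      √((x₁ - x₀) * (y₁ - y₀) * (p * (2 * π * Real.log b))) := by
  have hb0 : 0 < b := one_pos.trans_le hb
  have hlog : 0 ≤ Real.log b := Real.log_nonneg hb
  set R := Icc x₀ x₁ ×ℂ Icc y₀ y₁
  have cauchySchwarz := sq_setIntegral_mul_le (μ := volume) (u := fun _ => 1)
    (isCompact_Icc.reProdIm isCompact_Icc) continuousOn_const
    ((continuousOn_truncatedLogDeriv_mul_norm_deriv hb0 hU hF).mono hRU)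
  have area : ∫ z in R, truncatedLogDeriv b ‖F z‖ ^ 2 * ‖deriv F z‖ ^ 2 ≤
      p * (2 * π * Real.log b) :=
    setIntegral_reProdIm_comp_mul_norm_deriv_sq_le (k := fun w => truncatedLogDeriv b ‖w‖ ^ 2)
      hU hF hRU hp (((continuous_truncatedLogDeriv hb0).comp continuous_norm).pow 2)
      (fun w => sq_nonneg _) MeasurableSet.univ (mapsTo_univ _ _) (by positivity)
      (by simpa using lintegral_truncatedLogDeriv_norm_sq_le hb)
  refine (le_abs_self _).trans (Real.abs_le_sqrt ?_)
  simp only [one_mul, one_pow, mul_pow, setIntegral_const, smul_eq_mul, mul_one,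
    volume_real_reProdIm_Icc hx hy] at cauchySchwarz
  exact cauchySchwarz.trans
    (mul_le_mul_of_nonneg_left area (mul_nonneg (sub_nonneg.2 hx) (sub_nonneg.2 hy)))

theorem integral_le_of_le_truncatedLog_vertical (hb : 1 ≤ b) (hU : IsOpen U)
    (hF : DifferentiableOn ℂ F U) (hx : x₀ ≤ x₁) (hy : y₀ ≤ y₁)
    (hRU : Icc x₀ x₁ ×ℂ Icc y₀ y₁ ⊆ U) (hp : PValentOn F (Ioo x₀ x₁ ×ℂ Ioo y₀ y₁) p)
    {D : ℝ → ℝ} (hD : IntervalIntegrable D volume x₀ x₁)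
    (hosc : ∀ x ∈ Icc x₀ x₁, ∃ s ∈ Icc y₀ y₁, ∃ t ∈ Icc y₀ y₁,
      D x ≤ truncatedLog b ‖F (x + t * I)‖ - truncatedLog b ‖F (x + s * I)‖) :
    ∫ x in x₀..x₁, D x ≤ √((x₁ - x₀) * (y₁ - y₀) * (p * (2 * π * Real.log b))) := by
  refine (integral_vertical_le_setIntegral_reProdIm hx hy
    ((continuousOn_truncatedLogDeriv_mul_norm_deriv (one_pos.trans_le hb) hU hF).mono hRU) hD
    fun x hxI => ?_).trans (setIntegral_truncatedLogDeriv_mul_norm_deriv_le hb hU hF hx hy hRU hp)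
  obtain ⟨s, hs, t, ht, hD_le⟩ := hosc x hxI
  have mem_U : ∀ y ∈ Icc y₀ y₁, (x + y * I : ℂ) ∈ U :=
    fun y hyI => hRU (add_mul_I_mem_reProdIm hxI hyI)
  have along_path := truncatedLog_norm_sub_le_integral hb (c := fun y : ℝ => F (x + y * I))
    (fun y hyI => hasDerivAt_comp_vertical (hF.differentiableAt (hU.mem_nhds (mem_U y hyI))))
    (((hF.deriv hU).continuousOn.comp (by fun_prop) mem_U).mul continuousOn_const) hs ht
  simp only [norm_mul, norm_I, mul_one] at along_path
  exact hD_le.trans along_path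

theorem integral_le_of_le_truncatedLog_horizontal (hb : 1 ≤ b) (hU : IsOpen U)
    (hF : DifferentiableOn ℂ F U) (hx : x₀ ≤ x₁) (hy : y₀ ≤ y₁)
    (hRU : Icc x₀ x₁ ×ℂ Icc y₀ y₁ ⊆ U) (hp : PValentOn F (Ioo x₀ x₁ ×ℂ Ioo y₀ y₁) p)
    {D : ℝ → ℝ} (hD : IntervalIntegrable D volume y₀ y₁)
    (hosc : ∀ y ∈ Icc y₀ y₁, ∃ s ∈ Icc x₀ x₁, ∃ t ∈ Icc x₀ x₁,
      D y ≤ truncatedLog b ‖F (t + y * I)‖ - truncatedLog b ‖F (s + y * I)‖) :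
    ∫ y in y₀..y₁, D y ≤ √((x₁ - x₀) * (y₁ - y₀) * (p * (2 * π * Real.log b))) := by
  refine (integral_horizontal_le_setIntegral_reProdIm hx hy
    ((continuousOn_truncatedLogDeriv_mul_norm_deriv (one_pos.trans_le hb) hU hF).mono hRU) hD
    fun y hyI => ?_).trans (setIntegral_truncatedLogDeriv_mul_norm_deriv_le hb hU hF hx hy hRU hp)
  obtain ⟨s, hs, t, ht, hD_le⟩ := hosc y hyI
  have mem_U : ∀ x ∈ Icc x₀ x₁, (x + y * I : ℂ) ∈ U :=
    fun x hxI => hRU (add_mul_I_mem_reProdIm hxI hyI)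
  exact hD_le.trans (truncatedLog_norm_sub_le_integral hb (c := fun x : ℝ => F (x + y * I))
    (fun x hxI => hasDerivAt_comp_horizontal (hF.differentiableAt (hU.mem_nhds (mem_U x hxI))))
    ((hF.deriv hU).continuousOn.comp (by fun_prop) mem_U) hs ht)

end LengthArea

/-! ### Small values on circles -/

theorem exists_mem_forall_eq_deriv_ne_zero {f : ℂ → ℂ} {U B : Set ℂ}
    (hf : ∀ z ∈ U, DifferentiableAt ℂ f z) (hB : volume B ≠ 0) :
    ∃ c ∈ B, ∀ z ∈ U, f z = c → deriv f z ≠ 0 := by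
  set Z : Set ℂ := {z ∈ U | deriv f z = 0}
  have image_null : volume (f '' Z) = 0 := by
    refine addHaar_image_eq_zero_of_det_fderivWithin_eq_zero volume (f' := fun z =>
        ((ContinuousLinearMap.toSpanSingleton ℂ (deriv f z)).restrictScalars ℝ : ℂ →L[ℝ] ℂ))
      (fun z hz => ((hf z hz.1).hasDerivAt.hasFDerivAt.restrictScalars ℝ).hasFDerivWithinAt)
      fun z hz => ?_
    rw [← abs_eq_zero, abs_det_restrictScalars_toSpanSingleton, hz.2, norm_zero,
      zero_pow two_ne_zero]
  obtain ⟨c, hcB, hcZ⟩ := not_subset.1 fun hsub => hB (measure_mono_null hsub image_null)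
  exact ⟨c, hcB, fun z hz hfz hd => hcZ ⟨z, ⟨hz, hd⟩, hfz⟩⟩

theorem exists_eq_prod_sub_mul {U : Set ℂ} (hU : IsOpen U) {F : ℂ → ℂ}
    (hF : DifferentiableOn ℂ F U) (S : Finset ℂ) (hS : ∀ α ∈ S, α ∈ U ∧ F α = 0) :
    ∃ g : ℂ → ℂ, DifferentiableOn ℂ g U ∧ ∀ z ∈ U, F z = (∏ α ∈ S, (z - α)) * g z := by
  classical
  induction S using Finset.induction_on with
  | empty => exact ⟨F, hF, by simp⟩
  | insert α S hα ih =>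
    obtain ⟨g, hg, hFg⟩ := ih fun β hβ => hS β (Finset.mem_insert_of_mem hβ)
    obtain ⟨hαU, hFα⟩ := hS α (Finset.mem_insert_self _ _)
    have prod_ne_zero : ∏ β ∈ S, (α - β) ≠ 0 :=
      Finset.prod_ne_zero_iff.2 fun β hβ => sub_ne_zero.2 fun h => hα (h ▸ hβ)
    have hgα : g α = 0 := (mul_eq_zero.1 ((hFg α hαU).symm.trans hFα)).resolve_left prod_ne_zero
    refine ⟨dslope g α, (differentiableOn_dslope (hU.mem_nhds hαU)).2 hg, fun z hz => ?_⟩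
    have dslope_eq : (z - α) * dslope g α z = g z := by
      simpa [hgα] using sub_smul_dslope g α z
    rw [hFg z hz, Finset.prod_insert hα, ← dslope_eq]
    ring

theorem exists_eq_prod_sub_mul_ne_zero {U : Set ℂ} (hU : IsOpen U) {F : ℂ → ℂ}
    (hF : DifferentiableOn ℂ F U) (S : Finset ℂ) (hS : ∀ z, z ∈ S ↔ z ∈ U ∧ F z = 0)
    (hsimple : ∀ z ∈ S, deriv F z ≠ 0) :
    ∃ g : ℂ → ℂ, DifferentiableOn ℂ g U ∧ (∀ z ∈ U, g z ≠ 0) ∧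
      ∀ z ∈ U, F z = (∏ α ∈ S, (z - α)) * g z := by
  obtain ⟨g, hg, hFg⟩ := exists_eq_prod_sub_mul hU hF S fun α hα => (hS α).1 hα
  refine ⟨g, hg, fun z hz hgz => ?_, hFg⟩
  have hzS : z ∈ S := (hS z).2 ⟨hz, by rw [hFg z hz, hgz, mul_zero]⟩
  have prod_differentiable : Differentiable ℂ fun z : ℂ => ∏ α ∈ S, (z - α) := by fun_prop
  have deriv_eq := ((prod_differentiable z).hasDerivAt.mul
    (hg.differentiableAt (hU.mem_nhds hz)).hasDerivAt).congr_of_eventuallyEq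
    (eventually_of_mem (hU.mem_nhds hz) hFg)
  refine hsimple z hzS (deriv_eq.deriv.trans ?_)
  rw [hgz, Finset.prod_eq_zero hzS (sub_self z), mul_zero, zero_mul, add_zero]

theorem iteratedDeriv_polynomial_eval (n : ℕ) (P : Polynomial ℂ) :
    iteratedDeriv n (fun z => P.eval z) = fun z => (Polynomial.derivative^[n] P).eval z := by
  induction n generalizing P with
  | zero => simp
  | succ n ih =>
    rw [iteratedDeriv_succ', Function.iterate_succ_apply, ← ih]
    congr 1
    ext z
    exact P.deriv

theorem iteratedDeriv_prod_sub (S : Finset ℂ) (z : ℂ) :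
    iteratedDeriv S.card (fun z : ℂ => ∏ α ∈ S, (z - α)) z = (S.card ! : ℂ) := by
  set P : Polynomial ℂ := ∏ α ∈ S, (Polynomial.X - Polynomial.C α) with hP
  have monic : P.Monic := Polynomial.monic_prod_of_monic _ _ fun α _ => Polynomial.monic_X_sub_C α
  have natDegree_eq : P.natDegree = S.card := by
    rw [hP, Polynomial.natDegree_prod_of_monic _ _ fun α _ => Polynomial.monic_X_sub_C α]
    simp
  have coeff_eq : P.coeff S.card = 1 := natDegree_eq ▸ monic
  have derivative_const : (Polynomial.derivative^[S.card] P).natDegree = 0 := by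
    simpa [natDegree_eq] using Polynomial.natDegree_iterate_derivative P S.card
  have eval_eq : (fun z : ℂ => ∏ α ∈ S, (z - α)) = fun z => P.eval z := by
    ext z
    simp [hP, Polynomial.eval_prod]
  rw [eval_eq, iteratedDeriv_polynomial_eval, Polynomial.eq_C_of_natDegree_eq_zero derivative_const]
  simp [Polynomial.coeff_iterate_derivative, coeff_eq, Nat.descFactorial_self]

theorem norm_iteratedDeriv_mul_le {F G : ℂ → ℂ} {x : ℂ} {q : ℕ} (hF : ContDiffAt ℂ q F x)
    (hG : ContDiffAt ℂ q G x) {A B : ℝ} (hA : ∀ i ≤ q, ‖iteratedDeriv i F x‖ ≤ A * i !)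
    (hB : ∀ i ≤ q, ‖iteratedDeriv i G x‖ ≤ B * i !) :
    ‖iteratedDeriv q (F * G) x‖ ≤ (q + 1) * (A * B) * q ! := by
  have hA0 : 0 ≤ A := by simpa using (norm_nonneg _).trans (hA 0 (Nat.zero_le q))
  rw [iteratedDeriv_mul hF hG]
  calc ‖∑ i ∈ Finset.range (q + 1),
        (q.choose i : ℂ) * iteratedDeriv i F x * iteratedDeriv (q - i) G x‖
      ≤ ∑ _ ∈ Finset.range (q + 1), A * B * (q ! : ℝ) := norm_sum_le_of_le _ fun i hi => by
        have hiq : i ≤ q := Finset.mem_range_succ_iff.1 hi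
        rw [norm_mul, norm_mul, norm_natCast, ← Nat.choose_mul_factorial_mul_factorial hiq]
        calc (q.choose i : ℝ) * ‖iteratedDeriv i F x‖ * ‖iteratedDeriv (q - i) G x‖
            ≤ q.choose i * (A * i !) * (B * (q - i)!) := by
              gcongr
              exacts [hA i hiq, hB (q - i) (Nat.sub_le q i)]
          _ = A * B * ((q.choose i * i ! * (q - i)! : ℕ) : ℝ) := by push_cast; ring
    _ = (q + 1) * (A * B) * q ! := by simp; ring

theorem norm_prod_sub_le {S : Finset ℂ} {r : ℝ} (hS : ∀ α ∈ S, ‖α‖ ≤ r) {z : ℂ} (hz : ‖z‖ ≤ r) :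
    ‖∏ α ∈ S, (z - α)‖ ≤ (2 * r) ^ S.card := by
  rw [norm_prod, ← Finset.prod_const]
  refine Finset.prod_le_prod (fun α _ => norm_nonneg _) fun α hα => ?_
  linarith [norm_sub_le z α, hS α hα]

theorem norm_iteratedDeriv_zero_le_four_pow {G : ℂ → ℂ} (hG : DifferentiableOn ℂ G (ball 0 1))
    {s : ℝ} (hs : 1 / 4 ≤ s) (hs1 : s < 1) {B : ℝ} (hB : ∀ z, ‖z‖ = s → ‖G z‖ ≤ B) {j q : ℕ}
    (hjq : j ≤ q) : ‖iteratedDeriv j G 0‖ ≤ 4 ^ q * B * j ! := by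
  have hs0 : 0 < s := by linarith
  have hB0 : 0 ≤ B := (norm_nonneg _).trans (hB s (by simp [abs_of_pos hs0]))
  have inv_pow_le : 1 / s ^ j ≤ (4 : ℝ) ^ q :=
    calc 1 / s ^ j = (1 / s) ^ j := (one_div_pow s j).symm
      _ ≤ 4 ^ j := by
          gcongr
          rw [div_le_iff₀ hs0]
          linarith
      _ ≤ 4 ^ q := pow_le_pow_right₀ (by norm_num) hjq
  have cauchy : ‖iteratedDeriv j G 0‖ ≤ j ! * B / s ^ j :=
    norm_iteratedDeriv_le_of_forall_mem_sphere_norm_le j hs0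
      (DifferentiableOn.diffContOnCl (by
        rw [closure_ball _ hs0.ne']; exact hG.mono (closedBall_subset_ball hs1)))
      fun z hz => hB z (mem_sphere_zero_iff_norm.1 hz)
  calc ‖iteratedDeriv j G 0‖ ≤ j ! * B / s ^ j := cauchy
    _ = 1 / s ^ j * B * j ! := by ring
    _ ≤ 4 ^ q * B * j ! := by gcongr

-- Since `∏ (z - α) = F · g⁻¹`, comparing the derivatives of order `S.card` at `0` bounds `m`.
theorem le_of_simple_zeros_of_le_norm_on_sphere {F : ℂ → ℂ}
    (hF : DifferentiableOn ℂ F (ball 0 1)) {S : Finset ℂ}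
    (hS : ∀ z, z ∈ S ↔ z ∈ ball (0 : ℂ) 1 ∧ F z = 0) (hsimple : ∀ z ∈ S, deriv F z ≠ 0)
    {A : ℝ} (hA : ∀ i ≤ S.card, ‖iteratedDeriv i F 0‖ ≤ A * i !)
    {s : ℝ} (hs : 1 / 4 ≤ s) (hs1 : s < 1) {m : ℝ} (hm : 0 < m) (hmF : ∀ z, ‖z‖ = s → m ≤ ‖F z‖) :
    m ≤ (S.card + 1) * A * 8 ^ S.card := by
  set q := S.card
  have zero_mem : ball (0 : ℂ) 1 ∈ 𝓝 0 := ball_mem_nhds 0 one_pos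
  obtain ⟨g, hg, hg0, hFg⟩ := exists_eq_prod_sub_mul_ne_zero isOpen_ball hF S hS hsimple
  have inv_g_le : ∀ z, ‖z‖ = s → ‖(g z)⁻¹‖ ≤ 2 ^ q / m := fun z hz => by
    have hz1 : z ∈ ball (0 : ℂ) 1 := by simpa [hz] using hs1
    have prod_le : ‖∏ α ∈ S, (z - α)‖ ≤ 2 ^ q := by
      simpa using norm_prod_sub_le (r := 1)
        (fun α hα => (mem_ball_zero_iff.1 ((hS α).1 hα).1).le) (hz.trans_lt hs1).le
    have m_le : m ≤ ‖∏ α ∈ S, (z - α)‖ * ‖g z‖ := by simpa [hFg z hz1] using hmF z hz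
    rw [norm_inv, inv_le_iff_one_le_mul₀ (norm_pos_iff.2 (hg0 z hz1)), div_mul_eq_mul_div,
      le_div_iff₀ hm, one_mul]
    exact m_le.trans (by gcongr)
  have prod_eq : (fun z : ℂ => ∏ α ∈ S, (z - α)) =ᶠ[𝓝 0] F * fun z => (g z)⁻¹ := by
    filter_upwards [zero_mem] with z hz
    simp [hFg z hz, hg0 z hz]
  have factorial_le : (q ! : ℝ) ≤ (q + 1) * (A * (4 ^ q * (2 ^ q / m))) * q ! :=
    calc (q ! : ℝ) = ‖iteratedDeriv q (F * fun z => (g z)⁻¹) 0‖ := by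
          rw [← prod_eq.iteratedDeriv_eq, iteratedDeriv_prod_sub, norm_natCast]
      _ ≤ _ := norm_iteratedDeriv_mul_le (hF.analyticAt zero_mem).contDiffAt
          ((hg.inv hg0).analyticAt zero_mem).contDiffAt hA
          fun j hj => norm_iteratedDeriv_zero_le_four_pow (hg.inv hg0) hs hs1 inv_g_le hj
  have one_le := le_of_mul_le_mul_right ((one_mul _).trans_le factorial_le)
    (by exact_mod_cast q.factorial_pos)
  calc m ≤ (q + 1) * (A * (4 ^ q * (2 ^ q / m))) * m := le_mul_of_one_le_left hm.le one_le
    _ = (q + 1) * A * (4 * 2) ^ q := by rw [mul_pow]; field_simp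
    _ = (q + 1) * A * 8 ^ q := by norm_num

/-- The class of functions to which the theorem reduces by scaling: `p`-valent holomorphic functions
on the unit disk whose Taylor coefficients `f⁽ⁱ⁾(0) / i!` with `i ≤ p` have modulus at most `1`. -/
structure IsNormalizedPValent (p : ℕ) (f : ℂ → ℂ) : Prop where
  differentiableOn : DifferentiableOn ℂ f (ball 0 1)
  pValentOn : PValentOn f (ball 0 1) p
  norm_iteratedDeriv_le : ∀ i ≤ p, ‖iteratedDeriv i f 0‖ ≤ i !

theorem PValentOn.finite_fiber {f : ℂ → ℂ} {W : Set ℂ} {p : ℕ} (hf : PValentOn f W p) (c : ℂ) :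
    {z | z ∈ W ∧ f z = c}.Finite := by
  by_contra hinf
  obtain ⟨s, hs, hcard⟩ := Set.Infinite.exists_subset_card_eq hinf (p + 1)
  have := hf c s fun z hz => hs hz
  omega

theorem IsNormalizedPValent.norm_iteratedDeriv_sub_const_le {f : ℂ → ℂ} {p : ℕ}
    (hf : IsNormalizedPValent p f) {c : ℂ} (hc : ‖c‖ ≤ 1) {i : ℕ} (hi : i ≤ p) :
    ‖iteratedDeriv i (fun z => f z - c) 0‖ ≤ 2 * i ! := by
  have hfa : AnalyticAt ℂ f 0 := hf.differentiableOn.analyticAt (ball_mem_nhds 0 one_pos)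
  have norm_const_le : ‖iteratedDeriv i (fun _ : ℂ => c) 0‖ ≤ i ! := by
    rw [iteratedDeriv_const]
    split_ifs with h
    · simpa [h] using hc
    · simp
  rw [iteratedDeriv_fun_sub hfa.contDiffAt contDiffAt_const, two_mul]
  exact (norm_sub_le _ _).trans (add_le_add (hf.norm_iteratedDeriv_le i hi) norm_const_le)

theorem IsNormalizedPValent.exists_norm_eq_norm_le {f : ℂ → ℂ} {p : ℕ}
    (hf : IsNormalizedPValent p f) {s : ℝ} (hs : 1 / 4 ≤ s) (hs1 : s < 1) :
    ∃ z : ℂ, ‖z‖ = s ∧ ‖f z‖ ≤ 2 * (p + 1) * 8 ^ p + 1 := by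
  have hs0 : 0 < s := by linarith
  obtain ⟨c, hc1, hregular⟩ := exists_mem_forall_eq_deriv_ne_zero (f := f)
    (fun z hz => hf.differentiableOn.differentiableAt (isOpen_ball.mem_nhds hz))
    (measure_ball_pos volume (0 : ℂ) one_pos).ne'
  have hc : ‖c‖ ≤ 1 := (mem_ball_zero_iff.1 hc1).le
  set F : ℂ → ℂ := fun z => f z - c
  have hF : DifferentiableOn ℂ F (ball 0 1) := hf.differentiableOn.sub_const c
  set S : Finset ℂ := (hf.pValentOn.finite_fiber c).toFinset
  have hS : ∀ z, z ∈ S ↔ z ∈ ball (0 : ℂ) 1 ∧ F z = 0 := fun z => by simp [S, F, sub_eq_zero]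
  have hcard : S.card ≤ p := hf.pValentOn c S fun z hz => by
    simpa [S] using hz
  obtain ⟨z, hz, hmin⟩ := (isCompact_sphere (0 : ℂ) s).exists_isMinOn
    ⟨(s : ℂ), by simp [abs_of_pos hs0]⟩
    (hF.continuousOn.mono (sphere_subset_closedBall.trans (closedBall_subset_ball hs1))).norm
  have norm_F_le : ‖F z‖ ≤ 2 * (p + 1) * 8 ^ p := by
    rcases (norm_nonneg (F z)).eq_or_lt with h0 | hpos
    · rw [← h0]; positivity
    calc ‖F z‖ ≤ (S.card + 1) * 2 * 8 ^ S.card :=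
          le_of_simple_zeros_of_le_norm_on_sphere hF hS
            (fun w hw => by
              obtain ⟨hw1, hFw⟩ := (hS w).1 hw
              simpa [F] using hregular w hw1 (sub_eq_zero.1 hFw))
            (fun i hi => hf.norm_iteratedDeriv_sub_const_le hc (hi.trans hcard)) hs hs1 hpos
            fun w hw => hmin (mem_sphere_zero_iff_norm.2 hw)
      _ ≤ (p + 1) * 2 * 8 ^ p := by gcongr; norm_num
      _ = 2 * (p + 1) * 8 ^ p := by ring
  refine ⟨z, mem_sphere_zero_iff_norm.1 hz, ?_⟩
  calc ‖f z‖ = ‖F z + c‖ := by simp [F]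
    _ ≤ 2 * (p + 1) * 8 ^ p + 1 := (norm_add_le _ _).trans (add_le_add norm_F_le hc)

/-! ### Bounds on small disks -/

theorem isOpen_re_neg : IsOpen {w : ℂ | w.re < 0} := isOpen_lt continuous_re continuous_const

theorem mapsTo_exp_re_neg : MapsTo exp {w : ℂ | w.re < 0} (ball 0 1) := fun w hw => by
  rwa [mem_ball_zero_iff, norm_exp, Real.exp_lt_one_iff]

theorem PValentOn.comp_exp {f : ℂ → ℂ} {p : ℕ} (hf : PValentOn f (ball 0 1) p) {x₀ x₁ : ℝ}
    (hx₁ : x₁ ≤ 0) : PValentOn (f ∘ exp) (Ioo x₀ x₁ ×ℂ Ioo (-π) π) p :=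
  hf.comp (fun _ hw => mapsTo_exp_re_neg (hw.1.2.trans_le hx₁)) fun _ hu _ hv =>
    exp_inj_of_neg_pi_lt_of_le_pi hu.2.1 hu.2.2.le hv.2.1 hv.2.2.le

theorem exp_add_arg_mul_I {z : ℂ} {x : ℝ} (hz : ‖z‖ = Real.exp x) : exp (x + z.arg * I) = z := by
  rw [exp_add, ← ofReal_exp, ← hz, norm_mul_exp_arg_mul_I]

theorem arg_mem_Icc (z : ℂ) : z.arg ∈ Icc (-π) π := Ioc_subset_Icc_self z.arg_mem_Ioc

theorem le_of_sub_le_sqrt_mul {L K c : ℝ} (hK : 0 ≤ K) (hc : 0 ≤ c)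
    (h : L - K ≤ √(c * L)) : L ≤ 2 * K + c := by
  by_contra! hlt
  have hsq := (Real.le_sqrt' (by linarith)).1 h
  nlinarith

theorem mul_log_sub_log_two_le_sqrt {f : ℂ → ℂ} {p : ℕ} (hf : DifferentiableOn ℂ f (ball 0 1))
    (hp : PValentOn f (ball 0 1) p) {x₀ x₁ b : ℝ} (hx : x₀ ≤ x₁) (hx₁ : x₁ < 0) (hb : 1 ≤ b)
    (hsmall : ∀ x ∈ Icc x₀ x₁, ∃ z, ‖z‖ = Real.exp x ∧ ‖f z‖ ≤ 1)
    (hlarge : ∀ x ∈ Icc x₀ x₁, ∃ z, ‖z‖ = Real.exp x ∧ b ≤ ‖f z‖) :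
    (x₁ - x₀) * (Real.log b - Real.log 2) ≤
      √((x₁ - x₀) * (π - -π) * (p * (2 * π * Real.log b))) := by
  have neg_pi_le_pi : -π ≤ π := by linarith [Real.pi_pos]
  rw [← smul_eq_mul, ← intervalIntegral.integral_const]
  refine integral_le_of_le_truncatedLog_vertical hb isOpen_re_neg
    (hf.comp differentiable_exp.differentiableOn mapsTo_exp_re_neg) hx neg_pi_le_pi
    (fun z hz => hz.1.2.trans_lt hx₁) (hp.comp_exp hx₁.le) intervalIntegrable_const fun x hxI => ?_
  obtain ⟨z, hz, hfz⟩ := hsmall x hxI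
  obtain ⟨w, hw, hfw⟩ := hlarge x hxI
  refine ⟨z.arg, arg_mem_Icc z, w.arg, arg_mem_Icc w, ?_⟩
  rw [Function.comp_apply, Function.comp_apply, exp_add_arg_mul_I hz, exp_add_arg_mul_I hw]
  exact log_sub_log_two_le_truncatedLog_sub hb hfw (norm_nonneg _) hfz

theorem log_le_two_mul_log_two_add_div {f : ℂ → ℂ} {p : ℕ} (hf : DifferentiableOn ℂ f (ball 0 1))
    (hp : PValentOn f (ball 0 1) p) {x₀ x₁ b : ℝ} (hx : x₀ < x₁) (hx₁ : x₁ < 0) (hb : 1 ≤ b)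
    (hsmall : ∀ x ∈ Icc x₀ x₁, ∃ z, ‖z‖ = Real.exp x ∧ ‖f z‖ ≤ 1)
    (hlarge : ∀ x ∈ Icc x₀ x₁, ∃ z, ‖z‖ = Real.exp x ∧ b ≤ ‖f z‖) :
    Real.log b ≤ 2 * Real.log 2 + 4 * π ^ 2 * p / (x₁ - x₀) := by
  have hwidth : 0 < x₁ - x₀ := sub_pos.2 hx
  refine le_of_sub_le_sqrt_mul (Real.log_nonneg one_le_two) (by positivity) ?_
  rw [← mul_le_mul_iff_right₀ hwidth, ← Real.sqrt_sq hwidth.le, ← Real.sqrt_mul (sq_nonneg _),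
    Real.sqrt_sq hwidth.le]
  refine (mul_log_sub_log_two_le_sqrt hf hp hx.le hx₁ hb hsmall hlarge).trans_eq (congrArg _ ?_)
  field_simp
  ring

theorem exists_norm_eq_forall_norm_le {f : ℂ → ℂ} (hf : DifferentiableOn ℂ f (ball 0 1)) {s : ℝ}
    (hs0 : 0 < s) (hs1 : s < 1) : ∃ w, ‖w‖ = s ∧ ∀ z, ‖z‖ ≤ s → ‖f z‖ ≤ ‖f w‖ := by
  have closure_eq : closure (ball (0 : ℂ) s) = closedBall 0 s := closure_ball _ hs0.ne'
  obtain ⟨w, hw, hmax⟩ := exists_mem_frontier_isMaxOn_norm (f := f) (U := ball (0 : ℂ) s)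
    isBounded_ball (nonempty_ball.2 hs0)
    (DifferentiableOn.diffContOnCl (closure_eq ▸ hf.mono (closedBall_subset_ball hs1)))
  rw [frontier_ball _ hs0.ne'] at hw
  exact ⟨w, mem_sphere_zero_iff_norm.1 hw,
    fun z hz => hmax (closure_eq ▸ mem_closedBall_zero_iff.2 hz)⟩

/-- A bound, depending only on `p`, for `|f|` on the disk of radius `1 / 4` when `f` is a normalized
`p`-valent function; the first factor bounds the minimum of `|f|` on every larger circle. -/
def innerBound (p : ℕ) : ℝ :=
  (2 * (p + 1) * 8 ^ p + 1) * Real.exp (2 * Real.log 2 + 4 * π ^ 2 * p / Real.log 2)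

theorem one_le_innerBound (p : ℕ) : 1 ≤ innerBound p :=
  one_le_mul_of_one_le_of_one_le (le_add_of_nonneg_left (by positivity))
    (Real.one_le_exp (by positivity))

theorem IsNormalizedPValent.norm_le_innerBound {f : ℂ → ℂ} {p : ℕ} (hf : IsNormalizedPValent p f)
    {z : ℂ} (hz : ‖z‖ ≤ 1 / 4) : ‖f z‖ ≤ innerBound p := by
  have hl : 0 < Real.log 2 := Real.log_pos one_lt_two
  set N : ℝ := 2 * (p + 1) * 8 ^ p + 1
  have hN : 0 < N := by positivity
  have norm_div_N (w : ℂ) : ‖f w / N‖ = ‖f w‖ / N := by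
    rw [norm_div, norm_real, Real.norm_of_nonneg hN.le]
  set b := ‖f z‖ / N
  suffices b ≤ Real.exp (2 * Real.log 2 + 4 * π ^ 2 * p / Real.log 2) from
    (div_le_iff₀' hN).1 this
  rcases lt_or_ge b 1 with hb | hb
  · exact hb.le.trans (Real.one_le_exp (by positivity))
  have exp_mem : ∀ x ∈ Icc (-(2 * Real.log 2)) (-Real.log 2),
      1 / 4 ≤ Real.exp x ∧ Real.exp x < 1 := fun x hx =>
    ⟨by rw [← Real.log_le_iff_le_exp (by norm_num), one_div, Real.log_inv,
          show (4 : ℝ) = 2 ^ 2 by norm_num, Real.log_pow]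
        exact_mod_cast hx.1,
      Real.exp_lt_one_iff.2 (hx.2.trans_lt (neg_neg_of_pos hl))⟩
  have width : -Real.log 2 - -(2 * Real.log 2) = Real.log 2 := by ring
  rw [← Real.log_le_iff_le_exp (one_pos.trans_le hb)]
  refine (log_le_two_mul_log_two_add_div (x₀ := -(2 * Real.log 2)) (x₁ := -Real.log 2)
    (hf.differentiableOn.div_const (N : ℂ)) (hf.pValentOn.div_const (ofReal_ne_zero.2 hN.ne'))
    (by linarith) (neg_neg_of_pos hl) hb (fun x hx => ?_) (fun x hx => ?_)).trans_eq (by rw [width])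
  · obtain ⟨w, hw, hfw⟩ := hf.exists_norm_eq_norm_le (exp_mem x hx).1 (exp_mem x hx).2
    exact ⟨w, hw, by rwa [norm_div_N, div_le_one hN]⟩
  · obtain ⟨w, hw, hmax⟩ := exists_norm_eq_forall_norm_le hf.differentiableOn (Real.exp_pos x)
      (exp_mem x hx).2
    refine ⟨w, hw, ?_⟩
    rw [norm_div_N]
    exact div_le_div_of_nonneg_right (hmax z (hz.trans (exp_mem x hx).1)) hN.le

theorem norm_iteratedDeriv_zero_le_factorial_mul_eight_pow {f : ℂ → ℂ}
    (hf : DifferentiableOn ℂ f (ball 0 1)) {M : ℝ} (hM : ∀ z, ‖z‖ ≤ 1 / 8 → ‖f z‖ ≤ M) (i : ℕ) :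
    ‖iteratedDeriv i f 0‖ ≤ i ! * (M * 8 ^ i) := by
  have cauchy := norm_iteratedDeriv_le_of_forall_mem_sphere_norm_le (c := (0 : ℂ)) (R := 1 / 8)
    i (by norm_num) (DifferentiableOn.diffContOnCl (by
      rw [closure_ball _ (by norm_num)]
      exact hf.mono (closedBall_subset_ball (by norm_num))))
    fun z hz => hM z (mem_sphere_zero_iff_norm.1 hz).le
  refine cauchy.trans_eq ?_
  rw [one_div_pow, div_div_eq_mul_div, div_one, mul_assoc]

theorem norm_le_innerBound_mul_of_norm_le {f : ℂ → ℂ} {p : ℕ}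
    (hf : DifferentiableOn ℂ f (ball 0 1)) (hp : PValentOn f (ball 0 1) p) {M : ℝ} (hM0 : 0 < M)
    (hM : ∀ z, ‖z‖ ≤ 1 / 8 → ‖f z‖ ≤ M) {z : ℂ} (hz : ‖z‖ ≤ 1 / 4) :
    ‖f z‖ ≤ innerBound p * 8 ^ p * M := by
  set K : ℝ := 8 ^ p * M with hK
  have hK0 : 0 < K := by positivity
  have norm_div_K (w : ℂ) : ‖f w / K‖ = ‖f w‖ / K := by
    rw [norm_div, norm_real, Real.norm_of_nonneg hK0.le]
  have normalized : IsNormalizedPValent p fun z => f z / K :=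
    { differentiableOn := hf.div_const _
      pValentOn := hp.div_const (ofReal_ne_zero.2 hK0.ne')
      norm_iteratedDeriv_le := fun i hi => by
        have norm_div_le (w : ℂ) (hw : ‖w‖ ≤ 1 / 8) : ‖f w / K‖ ≤ M / K :=
          (norm_div_K w).trans_le (div_le_div_of_nonneg_right (hM w hw) hK0.le)
        refine (norm_iteratedDeriv_zero_le_factorial_mul_eight_pow (hf.div_const _) norm_div_le
          i).trans (mul_le_of_le_one_right (by positivity) ?_)
        rw [div_mul_eq_mul_div, div_le_one hK0, mul_comm M, hK]
        gcongr
        norm_num }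
  have := normalized.norm_le_innerBound hz
  rwa [norm_div_K, div_le_iff₀ hK0, hK, ← mul_assoc] at this

theorem norm_le_innerBound_mul_of_norm_le_closedBall {f : ℂ → ℂ} {p : ℕ} {c : ℂ} {d : ℝ}
    (hd : 0 < d) (hf : DifferentiableOn ℂ f (ball c d)) (hp : PValentOn f (ball c d) p) {M : ℝ}
    (hM0 : 0 < M) (hM : ∀ z ∈ closedBall c (d / 8), ‖f z‖ ≤ M) {z : ℂ}
    (hz : z ∈ closedBall c (d / 4)) : ‖f z‖ ≤ innerBound p * 8 ^ p * M := by
  have hdC : (d : ℂ) ≠ 0 := ofReal_ne_zero.2 hd.ne'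
  have norm_d_mul (u : ℂ) : ‖c + d * u - c‖ = d * ‖u‖ := by
    rw [add_sub_cancel_left, norm_mul, norm_real, Real.norm_of_nonneg hd.le]
  have maps : MapsTo (fun u : ℂ => c + d * u) (ball 0 1) (ball c d) := fun u hu => by
    rw [mem_ball_iff_norm, norm_d_mul]
    exact mul_lt_of_lt_one_right hd (mem_ball_zero_iff.1 hu)
  have rescaled := norm_le_innerBound_mul_of_norm_le (z := (z - c) / d)
    (hf.comp (by fun_prop) maps)
    (hp.comp maps fun u _ v _ huv => mul_left_cancel₀ hdC (add_left_cancel huv)) hM0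
    (fun u hu => hM _ (by
      rw [mem_closedBall_iff_norm, norm_d_mul, div_eq_mul_one_div]; gcongr))
    (by rw [norm_div, norm_real, Real.norm_of_nonneg hd.le, div_le_iff₀ hd, one_div_mul_eq_div]
        exact mem_closedBall_iff_norm.1 hz)
  rwa [Function.comp_apply, mul_div_cancel₀ _ hdC, add_sub_cancel] at rescaled

/-! ### Jensen's inequality and half-annuli -/

theorem log_norm_le_circleAverage_log_norm {G : ℂ → ℂ} {c : ℂ} {ρ : ℝ} (hρ : 0 < ρ)
    (hG : AnalyticOnNhd ℂ G (closedBall c ρ)) (hc : G c ≠ 0) :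
    Real.log ‖G c‖ ≤ Real.circleAverage (fun z => Real.log ‖G z‖) c ρ := by
  rw [← abs_of_pos hρ] at hG
  rw [hG.circleAverage_log_norm hρ.ne' hc]
  refine le_add_of_nonneg_left (finsum_nonneg fun u => ?_)
  by_cases hu : u ∈ closedBall c |ρ|
  · refine mul_nonneg (by exact_mod_cast MeromorphicOn.AnalyticOnNhd.divisor_nonneg hG u) ?_
    rcases eq_or_ne c u with rfl | hcu
    · simp
    rw [mem_closedBall_iff_norm', abs_of_pos hρ] at hu
    rw [← div_eq_mul_inv]
    exact Real.log_nonneg ((one_le_div (norm_sub_pos_iff.2 hcu)).2 hu)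
  · simp [hu]

theorem continuousOn_half_log_one_add_norm_sq {G : ℂ → ℂ} {S : Set ℂ} (hG : ContinuousOn G S) :
    ContinuousOn (fun z => Real.log (1 + ‖G z‖ ^ 2) / 2) S :=
  ((continuousOn_const.add (hG.norm.pow 2)).log fun _ _ =>
    (add_pos_of_pos_of_nonneg one_pos (sq_nonneg _)).ne').div_const 2

theorem log_norm_le_circleAverage_half_log_one_add_norm_sq {G : ℂ → ℂ} {c : ℂ} {ρ : ℝ}
    (hρ : 0 < ρ) (hG : AnalyticOnNhd ℂ G (closedBall c ρ)) (hc : G c ≠ 0) :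
    Real.log ‖G c‖ ≤ Real.circleAverage (fun z => Real.log (1 + ‖G z‖ ^ 2) / 2) c ρ := by
  have hsphere : AnalyticOnNhd ℂ G (sphere c |ρ|) := by
    rw [abs_of_pos hρ]; exact hG.mono sphere_subset_closedBall
  exact (log_norm_le_circleAverage_log_norm hρ hG hc).trans <| Real.circleAverage_mono
    hsphere.meromorphicOn.circleIntegrable_log_norm
    (continuousOn_half_log_one_add_norm_sq hsphere.continuousOn).circleIntegrable'
    fun z _ => log_le_half_log_one_add_sq ‖G z‖

theorem two_pi_mul_circleAverage (u : ℂ → ℝ) (c : ℂ) (ρ t : ℝ) :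
    2 * π * Real.circleAverage u c ρ = ∫ y in t..t + 2 * π, u (circleMap c ρ y) := by
  rw [Real.circleAverage_eq_integral_add t, smul_eq_mul, mul_inv_cancel_left₀ Real.two_pi_pos.ne',
    intervalIntegral.integral_comp_add_right fun y => u (circleMap c ρ y), zero_add, add_comm]

theorem two_pi_mul_circleAverage_le {u : ℂ → ℝ} {c : ℂ} {ρ m : ℝ} (hρ : 0 ≤ ρ)
    (hu : ContinuousOn u (sphere c ρ)) (hm : ∀ z ∈ sphere c ρ, u z ≤ m) :
    2 * π * Real.circleAverage u c ρ ≤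
      (∫ y in -(π / 2)..π / 2, u (circleMap c ρ y)) + π * m := by
  have hcont : Continuous fun y => u (circleMap c ρ y) :=
    hu.comp_continuous (continuous_circleMap c ρ) (circleMap_mem_sphere c hρ)
  have left_half_le : ∫ y in π / 2..-(π / 2) + 2 * π, u (circleMap c ρ y) ≤
      ∫ _ in π / 2..-(π / 2) + 2 * π, m :=
    intervalIntegral.integral_mono_on (by linarith [Real.pi_pos]) (hcont.intervalIntegrable _ _)
      intervalIntegrable_const fun y _ => hm _ (circleMap_mem_sphere c hρ y)
  rw [two_pi_mul_circleAverage u c ρ (-(π / 2)), ← intervalIntegral.integral_add_adjacent_intervals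
    (hcont.intervalIntegrable (-(π / 2)) (π / 2)) (hcont.intervalIntegrable _ _)]
  refine add_le_add_right (left_half_le.trans_eq ?_) _
  rw [intervalIntegral.integral_const, smul_eq_mul]
  ring

theorem exp_log_add_mul_I {ρ : ℝ} (hρ : 0 < ρ) (y : ℝ) :
    exp (Real.log ρ + y * I) = circleMap 0 ρ y := by
  rw [exp_add, ← ofReal_exp, Real.exp_log hρ, circleMap, zero_add]

theorem half_log_one_add_sq_le {s B : ℝ} (hs : 0 ≤ s) (hB : 1 ≤ B) (hsB : s ≤ B) :
    Real.log (1 + s ^ 2) / 2 ≤ Real.log B + Real.log 2 / 2 := by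
  have hle : Real.log (1 + s ^ 2) ≤ Real.log (2 * B ^ 2) :=
    Real.log_le_log (by positivity) (by nlinarith)
  rw [Real.log_mul two_ne_zero (by positivity), Real.log_pow] at hle
  push_cast at hle
  linarith

theorem pi_mul_le_integral_half_circle {G : ℂ → ℂ} {ρ C : ℝ} (hρ : 0 < ρ)
    (hG : AnalyticOnNhd ℂ G (closedBall 0 ρ)) (h0 : 1 ≤ ‖G 0‖) (hC : 1 ≤ C)
    (hGC : ∀ ζ ∈ closedBall (0 : ℂ) ρ, ‖G ζ‖ ≤ C * ‖G 0‖) :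
    π * (Real.log ‖G 0‖ - Real.log C - Real.log 2 / 2) ≤
      ∫ y in -(π / 2)..π / 2, Real.log (1 + ‖G (circleMap 0 ρ y)‖ ^ 2) / 2 := by
  have jensen := log_norm_le_circleAverage_half_log_one_add_norm_sq hρ hG
    (norm_pos_iff.1 (one_pos.trans_le h0))
  have half := two_pi_mul_circleAverage_le hρ.le
    (continuousOn_half_log_one_add_norm_sq (hG.continuousOn.mono sphere_subset_closedBall))
    fun z hz => half_log_one_add_sq_le (norm_nonneg _) (one_le_mul_of_one_le_of_one_le hC h0)
      (hGC z (sphere_subset_closedBall hz))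
  rw [Real.log_mul (by positivity) (by positivity)] at half
  nlinarith [Real.pi_pos]

theorem exp_re_nonneg {x y : ℝ} (hy : y ∈ Icc (-(π / 2)) (π / 2)) :
    0 ≤ (exp (x + y * I)).re := by
  simpa [exp_re] using mul_nonneg (Real.exp_pos x).le (Real.cos_nonneg_of_mem_Icc hy)

theorem mem_of_mem_reProdIm_half_strip {W : Set ℂ} (hW : ∀ ζ : ℂ, 0 ≤ ζ.re → ζ ∈ W) {s : Set ℝ}
    {w : ℂ} (hw : w ∈ s ×ℂ Icc (-(π / 2)) (π / 2)) : exp w ∈ W :=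
  hW _ (by simpa only [re_add_im] using exp_re_nonneg (x := w.re) hw.2)

section HalfAnnulus

variable {G : ℂ → ℂ} {W : Set ℂ} {p : ℕ} {ρ R : ℝ}

theorem integral_half_circle_le_sqrt (hW : IsOpen W) (hG : DifferentiableOn ℂ G W)
    (hp : PValentOn G W p) (hρ : 0 < ρ) (hρR : ρ ≤ R) (hreW : ∀ ζ : ℂ, 0 ≤ ζ.re → ζ ∈ W) {b : ℝ}
    (hb : 1 ≤ b) (hGb : ∀ ζ : ℂ, 0 ≤ ζ.re → ‖G ζ‖ ≤ b)
    (hR : ∀ ζ : ℂ, 0 ≤ ζ.re → ‖ζ‖ = R → ‖G ζ‖ ≤ 1)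
    (hint : IntervalIntegrable (fun y => Real.log (1 + ‖G (circleMap 0 ρ y)‖ ^ 2) / 2) volume
      (-(π / 2)) (π / 2)) :
    (∫ y in -(π / 2)..π / 2, Real.log (1 + ‖G (circleMap 0 ρ y)‖ ^ 2) / 2) - π * Real.log 2 ≤
      π * √(2 * p * Real.log (R / ρ) * Real.log b) := by
  have hpi := Real.pi_pos
  have hR0 : 0 < R := hρ.trans_le hρR
  have log_le : Real.log ρ ≤ Real.log R := Real.log_le_log hρ hρR
  have length_area := integral_le_of_le_truncatedLog_horizontal (F := G ∘ exp) (p := p) hb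
    (hW.preimage continuous_exp) (hG.comp differentiable_exp.differentiableOn fun _ hw => hw)
    log_le (by linarith : -(π / 2) ≤ π / 2) (fun w hw => mem_of_mem_reProdIm_half_strip hreW hw)
    (hp.comp (fun w hw => mem_of_mem_reProdIm_half_strip hreW ⟨hw.1, Ioo_subset_Icc_self hw.2⟩)
      fun u hu v hv => exp_inj_of_neg_pi_lt_of_le_pi (by linarith [hu.2.1]) (by linarith [hu.2.2])
        (by linarith [hv.2.1]) (by linarith [hv.2.2]))
    (hint.sub (intervalIntegrable_const (c := Real.log 2))) fun y hy =>
      ⟨Real.log R, right_mem_Icc.2 log_le, Real.log ρ, left_mem_Icc.2 log_le, by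
        rw [Function.comp_apply, Function.comp_apply, exp_log_add_mul_I hρ]
        exact le_truncatedLog_sub_truncatedLog hb (norm_nonneg _)
          (exp_log_add_mul_I hρ y ▸ hGb _ (exp_re_nonneg hy)) (norm_nonneg _)
          (hR _ (exp_re_nonneg hy) (by simp [norm_exp, Real.exp_log hR0]))⟩
  rw [intervalIntegral.integral_sub hint intervalIntegrable_const,
    intervalIntegral.integral_const, smul_eq_mul] at length_area
  calc _ = _ := by ring
    _ ≤ _ := length_area
    _ = √(π ^ 2 * (2 * p * Real.log (R / ρ) * Real.log b)) := by
      rw [Real.log_div hR0.ne' hρ.ne']; ring_nf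
    _ = _ := by rw [Real.sqrt_mul (sq_nonneg _), Real.sqrt_sq hpi.le]

theorem log_norm_zero_le_of_half_annulus (hW : IsOpen W) (hG : DifferentiableOn ℂ G W)
    (hp : PValentOn G W p) (hρ : 0 < ρ) (hρR : ρ ≤ R) (hρW : closedBall 0 ρ ⊆ W)
    (hreW : ∀ ζ : ℂ, 0 ≤ ζ.re → ζ ∈ W) (h0 : 1 ≤ ‖G 0‖) {C : ℝ} (hC : 1 ≤ C)
    (hGC : ∀ ζ ∈ closedBall (0 : ℂ) ρ, ‖G ζ‖ ≤ C * ‖G 0‖)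
    (hmax : ∀ ζ : ℂ, 0 ≤ ζ.re → ‖G ζ‖ ≤ ‖G 0‖)
    (hR : ∀ ζ : ℂ, 0 ≤ ζ.re → ‖ζ‖ = R → ‖G ζ‖ ≤ 1) :
    Real.log ‖G 0‖ ≤ 2 * (Real.log C + 3 / 2 * Real.log 2) + 2 * p * Real.log (R / ρ) := by
  have hlogC : 0 ≤ Real.log C := Real.log_nonneg hC
  have hlogR : 0 ≤ Real.log (R / ρ) := Real.log_nonneg ((one_le_div hρ).2 hρR)
  have hint := ((continuousOn_half_log_one_add_norm_sq (hG.continuousOn.mono hρW)).comp_continuous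
    (continuous_circleMap 0 ρ) (circleMap_mem_closedBall 0 hρ.le)).intervalIntegrable
    (μ := volume) (-(π / 2)) (π / 2)
  have length_area := integral_half_circle_le_sqrt hW hG hp hρ hρR hreW h0 hmax hR hint
  have jensen := pi_mul_le_integral_half_circle hρ
    (fun ζ hζ => hG.analyticAt (hW.mem_nhds (hρW hζ))) h0 hC hGC
  refine le_of_sub_le_sqrt_mul (by positivity) (by positivity) ?_
  refine le_of_mul_le_mul_left (le_trans (le_of_eq ?_)
    ((sub_le_sub_right jensen _).trans length_area)) Real.pi_pos
  ring

end HalfAnnulus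

/-! ### Growth -/

theorem one_le_norm_one_add {ζ : ℂ} (hζ : 0 ≤ ζ.re) : 1 ≤ ‖1 + ζ‖ :=
  (le_add_of_nonneg_right hζ).trans (by simpa using re_le_norm (1 + ζ))

theorem norm_le_norm_one_add {ζ : ℂ} (hζ : 0 ≤ ζ.re) : ‖ζ‖ ≤ ‖1 + ζ‖ := by
  refine le_of_sq_le_sq ?_ (norm_nonneg _)
  rw [← normSq_eq_norm_sq, ← normSq_eq_norm_sq, normSq_apply, normSq_apply]
  simp only [add_re, one_re, add_im, one_im, zero_add]
  nlinarith

theorem one_sub_le_norm_one_add {ζ : ℂ} {ρ : ℝ} (hζ : ‖ζ‖ ≤ ρ) : 1 - ρ ≤ ‖1 + ζ‖ := by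
  have := norm_sub_norm_le 1 (-ζ)
  rw [norm_one, norm_neg, sub_neg_eq_add] at this
  linarith

theorem div_one_add_mem_closedBall {z ζ : ℂ} {r : ℝ} (hz : ‖z‖ = r) (hr1 : r < 1)
    (hζ : ‖ζ‖ ≤ (1 - r) / 8) : z / (1 + ζ) ∈ closedBall z ((1 - r) / 7) := by
  have hr0 : 0 ≤ r := hz ▸ norm_nonneg z
  have norm_ge : 7 / 8 ≤ ‖1 + ζ‖ := le_trans (by linarith) (one_sub_le_norm_one_add hζ)
  have norm_pos : 0 < ‖1 + ζ‖ := by linarith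
  have ne_zero : 1 + ζ ≠ 0 := norm_pos_iff.1 norm_pos
  have sub_eq : z / (1 + ζ) - z = -(z * ζ) / (1 + ζ) := by field_simp; ring
  rw [mem_closedBall_iff_norm, sub_eq, norm_div, norm_neg, norm_mul, hz, div_le_iff₀ norm_pos]
  calc r * ‖ζ‖ ≤ 1 * ((1 - r) / 8) := by gcongr
    _ = (1 - r) / 7 * (7 / 8) := by ring
    _ ≤ (1 - r) / 7 * ‖1 + ζ‖ := by gcongr

section DividedByOneAdd

variable {z : ℂ}

theorem mapsTo_div_one_add : MapsTo (fun ζ => z / (1 + ζ)) {ζ | ‖z‖ < ‖1 + ζ‖} (ball 0 1) :=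
  fun ζ hζ => by
    rw [mem_ball_zero_iff, norm_div]
    exact (div_lt_one ((norm_nonneg z).trans_lt hζ)).2 hζ

theorem one_add_ne_zero {ζ : ℂ} (hζ : ‖z‖ < ‖1 + ζ‖) : 1 + ζ ≠ 0 :=
  norm_pos_iff.1 ((norm_nonneg z).trans_lt hζ)

theorem injOn_div_one_add (hz : z ≠ 0) : InjOn (fun ζ => z / (1 + ζ)) {ζ | ‖z‖ < ‖1 + ζ‖} :=
  fun u hu v hv huv => by
    rw [div_eq_div_iff (one_add_ne_zero hu) (one_add_ne_zero hv)] at huv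
    exact (add_left_cancel (mul_left_cancel₀ hz huv)).symm

end DividedByOneAdd

theorem norm_le_innerBound_mul_of_mem_closedBall {f : ℂ → ℂ} {p : ℕ}
    (hf : DifferentiableOn ℂ f (ball 0 1)) (hp : PValentOn f (ball 0 1) p) {r M : ℝ}
    (hr : 1 / 4 ≤ r) (hr1 : r < 1) (hM0 : 0 < M) (hM : ∀ z, ‖z‖ ≤ r → ‖f z‖ ≤ M) {z₁ z : ℂ}
    (hz₁ : ‖z₁‖ = r) (hz : z ∈ closedBall z₁ ((1 - r) / 7)) :
    ‖f z‖ ≤ innerBound p * 8 ^ p * M := by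
  have hr0 : 0 < r := by linarith
  set t : ℝ := (1 - r) / 7 / r
  have ht0 : 0 ≤ t := div_nonneg (by linarith) hr0.le
  have ht1 : t ≤ 1 := (div_le_one hr0).2 (by linarith)
  have htr : t * r = (1 - r) / 7 := div_mul_cancel₀ _ hr0.ne'
  set c : ℂ := ((1 - t : ℝ) : ℂ) * z₁ with hc
  have dist_c_zero : dist c 0 = r - (1 - r) / 7 := by
    rw [dist_zero_right, hc, norm_mul, norm_real, Real.norm_of_nonneg (by linarith), hz₁, sub_mul,
      htr, one_mul]
  have dist_z₁_c : dist z₁ c = (1 - r) / 7 := by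
    rw [dist_eq_norm, hc, show z₁ - ((1 - t : ℝ) : ℂ) * z₁ = (t : ℂ) * z₁ by push_cast; ring,
      norm_mul, norm_real, Real.norm_of_nonneg ht0, hz₁, htr]
  have ball_subset : ball c (8 * (1 - r) / 7) ⊆ ball 0 1 :=
    ball_subset_ball' (by rw [dist_c_zero]; linarith)
  refine norm_le_innerBound_mul_of_norm_le_closedBall (by linarith) (hf.mono ball_subset)
    (hp.mono ball_subset) hM0 (fun w hw => hM w (mem_closedBall_zero_iff.1
      (closedBall_subset_closedBall' (by rw [dist_c_zero]; linarith) hw)))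
    (closedBall_subset_closedBall' (by rw [dist_z₁_c]; linarith) hz)

/-- The constant in the bound `|f(z)| ≤ growthBound p / (1 - |z|)²ᵖ` for normalized `p`-valent
functions. -/
def growthBound (p : ℕ) : ℝ := innerBound p * (8 * (innerBound p * 8 ^ p) ^ 2 * 32 ^ (2 * p))

theorem innerBound_pos (p : ℕ) : 0 < innerBound p := one_pos.trans_le (one_le_innerBound p)

theorem one_le_innerBound_mul_eight_pow (p : ℕ) : 1 ≤ innerBound p * 8 ^ p :=
  one_le_mul_of_one_le_of_one_le (one_le_innerBound p) (one_le_pow₀ (by norm_num))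

theorem innerBound_le_growthBound (p : ℕ) : innerBound p ≤ growthBound p :=
  le_mul_of_one_le_right (innerBound_pos p).le <| one_le_mul_of_one_le_of_one_le
    (one_le_mul_of_one_le_of_one_le (by norm_num)
      (one_le_pow₀ (one_le_innerBound_mul_eight_pow p)))
    (one_le_pow₀ (by norm_num))

theorem IsNormalizedPValent.log_norm_div_innerBound_le {f : ℂ → ℂ} {p : ℕ}
    (hf : IsNormalizedPValent p f) {r : ℝ} (hr : 1 / 4 ≤ r) (hr1 : r < 1) {z : ℂ} (hz : ‖z‖ = r)
    (hmax : ∀ w, ‖w‖ ≤ r → ‖f w‖ ≤ ‖f z‖) (hlarge : innerBound p ≤ ‖f z‖) :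
    Real.log (‖f z‖ / innerBound p) ≤ 2 * (Real.log (innerBound p * 8 ^ p) + 3 / 2 * Real.log 2) +
      2 * p * Real.log (4 / ((1 - r) / 8)) := by
  have ha := innerBound_pos p
  have hr0 : 0 < r := by linarith
  set G : ℂ → ℂ := fun ζ => f (z / (1 + ζ)) / innerBound p
  have norm_G (ζ : ℂ) : ‖G ζ‖ = ‖f (z / (1 + ζ))‖ / innerBound p := by
    rw [norm_div, norm_real, Real.norm_of_nonneg ha.le]
  have norm_G_zero : ‖G 0‖ = ‖f z‖ / innerBound p := by simp [norm_G]
  have hG : DifferentiableOn ℂ G {ζ | ‖z‖ < ‖1 + ζ‖} :=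
    (hf.differentiableOn.comp ((differentiableOn_const z).div (by fun_prop)
      fun _ => one_add_ne_zero) mapsTo_div_one_add).div_const _
  have hp : PValentOn G {ζ | ‖z‖ < ‖1 + ζ‖} p :=
    (hf.pValentOn.comp mapsTo_div_one_add
      (injOn_div_one_add (norm_pos_iff.1 (hz ▸ hr0)))).div_const (ofReal_ne_zero.2 ha.ne')
  rw [← norm_G_zero]
  refine log_norm_zero_le_of_half_annulus
    (isOpen_lt continuous_const (by fun_prop)) hG hp (by linarith) (by linarith)
    (fun ζ hζ => ?_) (fun ζ hζ => ?_) (by rwa [norm_G_zero, one_le_div ha])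
    (one_le_innerBound_mul_eight_pow p) (fun ζ hζ => ?_) (fun ζ hζ => ?_) (fun ζ hζ hζ4 => ?_)
  · exact hz.trans_lt (lt_of_lt_of_le (by linarith)
      (one_sub_le_norm_one_add (mem_closedBall_zero_iff.1 hζ)))
  · exact (hz.trans_lt hr1).trans_le (one_le_norm_one_add hζ)
  · rw [norm_G, norm_G_zero, ← mul_div_assoc]
    gcongr
    exact norm_le_innerBound_mul_of_mem_closedBall hf.differentiableOn hf.pValentOn hr hr1
      (ha.trans_le hlarge) hmax hz
      (div_one_add_mem_closedBall hz hr1 (mem_closedBall_zero_iff.1 hζ))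
  · rw [norm_G, norm_G_zero]
    gcongr
    refine hmax _ ?_
    rw [norm_div, hz]
    exact div_le_self hr0.le (one_le_norm_one_add hζ)
  · rw [norm_G, div_le_one ha]
    refine hf.norm_le_innerBound ?_
    have := norm_le_norm_one_add hζ
    rw [norm_div, hz, div_le_iff₀ (by linarith)]
    linarith

theorem two_mul_log_add_eq_log {C s : ℝ} (hC : 0 < C) (hs : 0 < s) (p : ℕ) :
    2 * (Real.log C + 3 / 2 * Real.log 2) + 2 * p * Real.log s =
      Real.log (8 * C ^ 2 * s ^ (2 * p)) := by
  rw [Real.log_mul (by positivity) (by positivity), Real.log_mul (by positivity) (by positivity),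
    show (8 : ℝ) = 2 ^ 3 by norm_num, Real.log_pow, Real.log_pow, Real.log_pow]
  push_cast
  ring

theorem IsNormalizedPValent.norm_le_growthBound_div {f : ℂ → ℂ} {p : ℕ}
    (hf : IsNormalizedPValent p f) {z : ℂ} {r : ℝ} (hr1 : r < 1) (hz : ‖z‖ ≤ r) :
    ‖f z‖ ≤ growthBound p / (1 - r) ^ (2 * p) := by
  have hr0 : 0 ≤ r := (norm_nonneg z).trans hz
  have h1r : 0 < 1 - r := by linarith
  have ha := innerBound_pos p
  have innerBound_le : innerBound p ≤ growthBound p / (1 - r) ^ (2 * p) := by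
    refine (innerBound_le_growthBound p).trans (le_div_self ?_ (by positivity)
      (pow_le_one₀ h1r.le (by linarith)))
    exact ha.le.trans (innerBound_le_growthBound p)
  rcases le_total r (1 / 4) with hr | hr
  · exact (hf.norm_le_innerBound (hz.trans hr)).trans innerBound_le
  obtain ⟨w, hw, hmax⟩ := exists_norm_eq_forall_norm_le hf.differentiableOn (by linarith) hr1
  refine (hmax z hz).trans ?_
  rcases le_total ‖f w‖ (innerBound p) with hsmall | hlarge
  · exact hsmall.trans innerBound_le
  have hfw : 0 < ‖f w‖ := ha.trans_le hlarge
  have log_le := hf.log_norm_div_innerBound_le hr hr1 hw hmax hlarge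
  rw [two_mul_log_add_eq_log (by positivity) (by positivity),
    Real.log_le_log_iff (by positivity) (by positivity), div_le_iff₀' ha] at log_le
  refine log_le.trans_eq ?_
  rw [growthBound, show 4 / ((1 - r) / 8) = 32 / (1 - r) by field_simp; norm_num, div_pow]
  ring

/-! ### Integral means -/

section NormOnRectangle

variable {F : ℂ → ℂ} {U : Set ℂ} {p : ℕ} {x₀ x₁ y₀ y₁ : ℝ}

theorem intervalIntegrable_norm_vertical (hF : ContinuousOn F (Icc x₀ x₁ ×ℂ Icc y₀ y₁))
    (hy : y₀ ≤ y₁) {x : ℝ} (hx : x ∈ Icc x₀ x₁) :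
    IntervalIntegrable (fun y : ℝ => ‖F (x + y * I)‖) volume y₀ y₁ :=
  ContinuousOn.intervalIntegrable_of_Icc hy <|
    (hF.comp (by fun_prop) fun _ => add_mul_I_mem_reProdIm hx).norm

theorem integral_norm_sub_integral_norm_le_setIntegral_norm_deriv (hU : IsOpen U)
    (hF : DifferentiableOn ℂ F U) (hx : x₀ ≤ x₁) (hy : y₀ ≤ y₁)
    (hRU : Icc x₀ x₁ ×ℂ Icc y₀ y₁ ⊆ U) :
    (∫ y in y₀..y₁, ‖F (x₁ + y * I)‖) - ∫ y in y₀..y₁, ‖F (x₀ + y * I)‖ ≤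
      ∫ z in Icc x₀ x₁ ×ℂ Icc y₀ y₁, ‖deriv F z‖ := by
  have hint₀ := intervalIntegrable_norm_vertical (hF.continuousOn.mono hRU) hy (left_mem_Icc.2 hx)
  have hint₁ := intervalIntegrable_norm_vertical (hF.continuousOn.mono hRU) hy (right_mem_Icc.2 hx)
  rw [← intervalIntegral.integral_sub hint₁ hint₀]
  refine integral_horizontal_le_setIntegral_reProdIm hx hy
    ((hF.deriv hU).continuousOn.mono hRU).norm (hint₁.sub hint₀) fun y hyI => ?_
  have mem_U : ∀ x ∈ Icc x₀ x₁, (x + y * I : ℂ) ∈ U :=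
    fun x hxI => hRU (add_mul_I_mem_reProdIm hxI hyI)
  have hderiv : ∀ x ∈ Icc x₀ x₁,
      HasDerivAt (fun t : ℝ => F (t + y * I)) (deriv F (x + y * I)) x := fun x hxI =>
    hasDerivAt_comp_horizontal (hF.differentiableAt (hU.mem_nhds (mem_U x hxI)))
  have hcont : ContinuousOn (fun x : ℝ => ‖deriv F (x + y * I)‖) (Icc x₀ x₁) :=
    ((hF.deriv hU).continuousOn.comp (by fun_prop) mem_U).norm
  exact (norm_sub_norm_le _ _).trans <| norm_sub_le_integral_of_norm_deriv_le_of_le hx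
    (fun x hxI => (hderiv x hxI).continuousAt.continuousWithinAt)
    (fun x hxI => (hderiv x (Ioo_subset_Icc_self hxI)).differentiableAt.differentiableWithinAt)
    (Eventually.of_forall fun x hxI => (hderiv x (Ioo_subset_Icc_self hxI)).deriv ▸ le_rfl)
    (hcont.intervalIntegrable_of_Icc hx)

theorem sq_setIntegral_norm_deriv_le (hU : IsOpen U) (hF : DifferentiableOn ℂ F U)
    (hRU : Icc x₀ x₁ ×ℂ Icc y₀ y₁ ⊆ U) (hp : PValentOn F (Ioo x₀ x₁ ×ℂ Ioo y₀ y₁) p) {M : ℝ}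
    (hM0 : 0 ≤ M) (hM : ∀ z ∈ Icc x₀ x₁ ×ℂ Icc y₀ y₁, ‖F z‖ ≤ M) :
    (∫ z in Icc x₀ x₁ ×ℂ Icc y₀ y₁, ‖deriv F z‖) ^ 2 ≤
      p * (2 * π * M) * ∫ z in Icc x₀ x₁ ×ℂ Icc y₀ y₁, (‖F z‖ + 1) := by
  have norm_add_one_pos (z : ℂ) : 0 < ‖F z‖ + 1 := by positivity
  have sqrt_cont : ContinuousOn (fun z => √(‖F z‖ + 1)) U :=
    (hF.continuousOn.norm.add continuousOn_const).sqrt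
  have cauchySchwarz := sq_setIntegral_mul_le (μ := volume)
    (u := fun z => ‖deriv F z‖ / √(‖F z‖ + 1)) (v := fun z => √(‖F z‖ + 1))
    (isCompact_Icc.reProdIm isCompact_Icc)
    (((hF.deriv hU).continuousOn.norm.div sqrt_cont
      fun z _ => (Real.sqrt_pos.2 (norm_add_one_pos z)).ne').mono hRU) (sqrt_cont.mono hRU)
  have area : ∫ z in Icc x₀ x₁ ×ℂ Icc y₀ y₁, 1 / (‖F z‖ + 1) * ‖deriv F z‖ ^ 2 ≤
      p * (2 * π * M) :=
    setIntegral_reProdIm_comp_mul_norm_deriv_sq_le (k := fun w => 1 / (‖w‖ + 1)) hU hF hRU hp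
      (continuous_const.div (by fun_prop) fun w => by positivity) (fun w => by positivity)
      measurableSet_closedBall (fun z hz => mem_closedBall_zero_iff.2 (hM z hz)) (by positivity)
      (lintegral_closedBall_one_div_norm_add_one_le M)
  simp only [div_mul_cancel₀ _ (Real.sqrt_pos.2 (norm_add_one_pos _)).ne', div_pow,
    Real.sq_sqrt (norm_add_one_pos _).le] at cauchySchwarz
  simp only [one_div_mul_eq_div] at area
  exact cauchySchwarz.trans (mul_le_mul_of_nonneg_right area
    (integral_nonneg fun z => (norm_add_one_pos z).le))

theorem setIntegral_norm_add_one_le (hF : ContinuousOn F (Icc x₀ x₁ ×ℂ Icc y₀ y₁)) (hx : x₀ ≤ x₁)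
    (hy : y₀ ≤ y₁) {S : ℝ} (hS : ∀ x ∈ Icc x₀ x₁, ∫ y in y₀..y₁, ‖F (x + y * I)‖ ≤ S) :
    ∫ z in Icc x₀ x₁ ×ℂ Icc y₀ y₁, (‖F z‖ + 1) ≤ (x₁ - x₀) * (S + (y₁ - y₀)) := by
  have neg_le := integral_vertical_le_setIntegral_reProdIm hx hy (H := fun z => -(‖F z‖ + 1))
    (D := fun _ => -(S + (y₁ - y₀))) (hF.norm.add continuousOn_const).neg intervalIntegrable_const
    fun x hxI => by
      rw [intervalIntegral.integral_neg, intervalIntegral.integral_add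
        (intervalIntegrable_norm_vertical hF hy hxI) intervalIntegrable_const,
        intervalIntegral.integral_const, smul_eq_mul, mul_one]
      linarith [hS x hxI]
  rw [intervalIntegral.integral_const, integral_neg, smul_eq_mul, mul_neg] at neg_le
  exact neg_le_neg_iff.1 neg_le

end NormOnRectangle

section CircleAverage

variable {f : ℂ → ℂ} {p : ℕ} {r₀ r₁ M : ℝ}

theorem integral_norm_comp_exp {r : ℝ} (hr : 0 < r) :
    ∫ y in (-π)..π, ‖(f ∘ exp) (Real.log r + y * I)‖ =
      2 * π * Real.circleAverage (‖f ·‖) 0 r := by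
  rw [two_pi_mul_circleAverage _ _ _ (-π), show -π + 2 * π = π by ring]
  simp only [Function.comp_apply, exp_log_add_mul_I hr]

theorem circleAverage_norm_sub_le_sqrt (hf : DifferentiableOn ℂ f (ball 0 1))
    (hp : PValentOn f (ball 0 1) p) (hr₀ : 0 < r₀) (hr : r₀ ≤ r₁) (hr₁ : r₁ < 1)
    (hM : ∀ z, ‖z‖ ≤ r₁ → ‖f z‖ ≤ M) {S : ℝ}
    (hS : ∀ r ∈ Icc r₀ r₁, Real.circleAverage (‖f ·‖) 0 r ≤ S) :
    Real.circleAverage (‖f ·‖) 0 r₁ - Real.circleAverage (‖f ·‖) 0 r₀ ≤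
      √(p * M * Real.log (r₁ / r₀) * (S + 1)) := by
  have hpi := Real.pi_pos
  have hr₁0 : 0 < r₁ := hr₀.trans_le hr
  have log_le : Real.log r₀ ≤ Real.log r₁ := Real.log_le_log hr₀ hr
  have neg_pi_le_pi : -π ≤ π := by linarith
  have hM0 : 0 ≤ M := (norm_nonneg _).trans (hM 0 (by simpa using hr₁0.le))
  have hF : DifferentiableOn ℂ (f ∘ exp) {w | w.re < 0} :=
    hf.comp differentiable_exp.differentiableOn mapsTo_exp_re_neg
  have hRU : Icc (Real.log r₀) (Real.log r₁) ×ℂ Icc (-π) π ⊆ {w | w.re < 0} :=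
    fun w hw => hw.1.2.trans_lt (Real.log_neg hr₁0 hr₁)
  have growth := integral_norm_sub_integral_norm_le_setIntegral_norm_deriv isOpen_re_neg hF log_le
    neg_pi_le_pi hRU
  have length_area := sq_setIntegral_norm_deriv_le isOpen_re_neg hF hRU
    (hp.comp_exp (Real.log_neg hr₁0 hr₁).le) hM0 fun w hw => hM _ <| by
      rw [norm_exp]
      exact (Real.le_log_iff_exp_le hr₁0).1 hw.1.2
  have mass := setIntegral_norm_add_one_le (S := 2 * π * S) (hF.continuousOn.mono hRU) log_le
    neg_pi_le_pi fun x hx => by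
      rw [← Real.log_exp x, integral_norm_comp_exp (Real.exp_pos x)]
      gcongr
      exact hS _ ⟨(Real.log_le_iff_le_exp hr₀).1 hx.1, (Real.le_log_iff_exp_le hr₁0).1 hx.2⟩
  rw [integral_norm_comp_exp hr₀, integral_norm_comp_exp hr₁0] at growth
  have sqrt_eq : √(p * (2 * π * M) * ((Real.log r₁ - Real.log r₀) * (2 * π * S + (π - -π)))) =
      2 * π * √(p * M * Real.log (r₁ / r₀) * (S + 1)) := by
    rw [Real.log_div hr₁0.ne' hr₀.ne', ← Real.sqrt_sq Real.two_pi_pos.le,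
      ← Real.sqrt_mul (sq_nonneg _), Real.sqrt_sq Real.two_pi_pos.le]
    ring_nf
  have scaled := growth.trans <| (Real.le_sqrt_of_sq_le <| length_area.trans <|
    mul_le_mul_of_nonneg_left mass (by positivity)).trans_eq sqrt_eq
  rw [← mul_sub] at scaled
  exact le_of_mul_le_mul_left scaled Real.two_pi_pos

theorem circleAverage_norm_le {r : ℝ} (hf : ContinuousOn f (sphere 0 r)) (hr : 0 ≤ r)
    (hM : ∀ z, ‖z‖ = r → ‖f z‖ ≤ M) : Real.circleAverage (‖f ·‖) 0 r ≤ M := by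
  rw [← abs_of_nonneg hr] at hf hM
  exact Real.circleAverage_mono_on_of_le_circle (hf.norm.circleIntegrable' ) fun z hz =>
    hM z (mem_sphere_zero_iff_norm.1 hz)

theorem sqrt_mul_le_add_div_four {a b : ℝ} (ha : 0 ≤ a) (hb : 0 ≤ b) : √(a * b) ≤ a + b / 4 :=
  (Real.sqrt_le_left (by positivity)).2 (by nlinarith [sq_nonneg (a - b / 4)])

theorem circleAverage_norm_le_four_thirds_mul (hf : DifferentiableOn ℂ f (ball 0 1))
    (hp : PValentOn f (ball 0 1) p) (hr₀ : 0 < r₀) (hr : r₀ ≤ r₁) (hr₁ : r₁ < 1)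
    (hM : ∀ z, ‖z‖ ≤ r₁ → ‖f z‖ ≤ M) :
    Real.circleAverage (‖f ·‖) 0 r₁ ≤
      4 / 3 * (Real.circleAverage (‖f ·‖) 0 r₀ + p * M * Real.log (r₁ / r₀) + 1 / 4) := by
  set m : ℝ → ℝ := Real.circleAverage (‖f ·‖) 0
  have hM0 : 0 ≤ M := (norm_nonneg _).trans (hM 0 (by simpa using (hr₀.trans_le hr).le))
  have m_nonneg (r : ℝ) : 0 ≤ m r := Real.circleAverage_nonneg_of_nonneg fun z _ => norm_nonneg _
  have bddAbove : BddAbove (m '' Icc r₀ r₁) := by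
    refine ⟨M, forall_mem_image.2 fun r hrI => circleAverage_norm_le
      (hf.continuousOn.mono fun z hz => ?_) (hr₀.le.trans hrI.1) fun z hz => hM z (hz ▸ hrI.2)⟩
    exact mem_ball_zero_iff.2 ((mem_sphere_zero_iff_norm.1 hz).trans_lt (hrI.2.trans_lt hr₁))
  set S := sSup (m '' Icc r₀ r₁)
  have m_le_S (r : ℝ) (hrI : r ∈ Icc r₀ r₁) : m r ≤ S := le_csSup bddAbove ⟨r, hrI, rfl⟩
  have m_r₁_le := m_le_S r₁ (right_mem_Icc.2 hr)
  have S_nonneg : 0 ≤ S := (m_nonneg r₁).trans m_r₁_le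
  have S_le : S ≤ m r₀ + (p * M * Real.log (r₁ / r₀) + (S + 1) / 4) := by
    refine csSup_le ((nonempty_Icc.2 hr).image m) (forall_mem_image.2 fun r hrI => ?_)
    have increment := circleAverage_norm_sub_le_sqrt hf hp hr₀ hrI.1 (hrI.2.trans_lt hr₁)
      (fun z hz => hM z (hz.trans hrI.2)) fun s hs => m_le_S s ⟨hs.1, hs.2.trans hrI.2⟩
    have log_nonneg : 0 ≤ Real.log (r / r₀) := Real.log_nonneg ((one_le_div hr₀).2 hrI.1)
    have log_le : Real.log (r / r₀) ≤ Real.log (r₁ / r₀) :=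
      Real.log_le_log (div_pos (hr₀.trans_le hrI.1) hr₀) (div_le_div_of_nonneg_right hrI.2 hr₀.le)
    refine sub_le_iff_le_add'.1 (increment.trans
      ((sqrt_mul_le_add_div_four (by positivity) (by positivity)).trans ?_))
    gcongr
  linarith

end CircleAverage

/-- The constant in the bound `meanBound p * 2 ^ ((2 * p - 1) * (n + 1))` for the mean of `|f|` over
the circle of radius `1 - 2⁻⁽ⁿ⁺¹⁾`, for normalized `p`-valent functions `f`. -/
def meanBound (p : ℕ) : ℝ := 2 * (p * growthBound p * 4 ^ p + 1 / 4)

theorem growthBound_pos (p : ℕ) : 0 < growthBound p :=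
  (innerBound_pos p).trans_le (innerBound_le_growthBound p)

theorem meanBound_pos (p : ℕ) : 0 < meanBound p := by
  have := growthBound_pos p
  unfold meanBound
  positivity

theorem log_one_sub_half_div_one_sub_le {d : ℝ} (hd0 : 0 ≤ d) (hd : d ≤ 1 / 2) :
    Real.log ((1 - d / 2) / (1 - d)) ≤ d := by
  have hpos : 0 < 1 - d := by linarith
  refine (Real.log_le_sub_one_of_pos (div_pos (by linarith) hpos)).trans ?_
  rw [sub_le_iff_le_add, div_le_iff₀ hpos]
  nlinarith

theorem half_pow_succ_le_half (n : ℕ) : (1 / 2 : ℝ) ^ (n + 1) ≤ 1 / 2 :=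
  pow_le_of_le_one (by norm_num) (by norm_num) n.succ_ne_zero

theorem IsNormalizedPValent.norm_le_growthBound_mul_four_pow {f : ℂ → ℂ} {p : ℕ}
    (hf : IsNormalizedPValent p f) (n : ℕ) {z : ℂ} (hz : ‖z‖ ≤ 1 - (1 / 2) ^ (n + 1)) :
    ‖f z‖ ≤ growthBound p * (4 ^ p) ^ (n + 1) := by
  refine (hf.norm_le_growthBound_div (sub_lt_self 1 (by positivity)) hz).trans_eq ?_
  rw [sub_sub_cancel, one_div_pow, one_div_pow, div_div_eq_mul_div, div_one, ← pow_mul,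
    mul_comm (n + 1), pow_mul, pow_mul]
  norm_num

theorem four_pow_eq_two_mul {p : ℕ} (hp : 1 ≤ p) : (4 : ℝ) ^ p = 2 * 2 ^ (2 * p - 1) := by
  rw [← pow_succ', show 2 * p - 1 + 1 = 2 * p by omega, pow_mul]
  norm_num

theorem IsNormalizedPValent.circleAverage_norm_succ_le {f : ℂ → ℂ} {p : ℕ} (hp : 1 ≤ p)
    (hf : IsNormalizedPValent p f) (n : ℕ) :
    Real.circleAverage (‖f ·‖) 0 (1 - (1 / 2) ^ (n + 1 + 1)) ≤
      4 / 3 * (Real.circleAverage (‖f ·‖) 0 (1 - (1 / 2) ^ (n + 1)) +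
        p * growthBound p * 4 ^ p * (2 ^ (2 * p - 1)) ^ (n + 1) + 1 / 4) := by
  have hG := growthBound_pos p
  set d : ℝ := (1 / 2) ^ (n + 1) with hd
  have hd0 : 0 < d := by positivity
  have hd_le : d ≤ 1 / 2 := half_pow_succ_le_half n
  have hd2 : (1 / 2 : ℝ) ^ (n + 1 + 1) = d / 2 := by rw [pow_succ, hd]; ring
  have bound := fun z => hf.norm_le_growthBound_mul_four_pow (n + 1) (z := z)
  rw [hd2] at bound ⊢
  refine (circleAverage_norm_le_four_thirds_mul hf.differentiableOn hf.pValentOn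
      (r₀ := 1 - d) (by linarith) (by linarith) (by linarith) bound).trans ?_
  gcongr 4 / 3 * (_ + ?_ + 1 / 4)
  calc _ ≤ p * (growthBound p * (4 ^ p) ^ (n + 1 + 1)) * d := by
        gcongr
        exact log_one_sub_half_div_one_sub_le hd0.le hd_le
    _ = _ := by
        rw [pow_succ (4 ^ p), four_pow_eq_two_mul hp, hd, mul_pow, one_div_pow]
        field_simp

theorem IsNormalizedPValent.circleAverage_norm_le_meanBound_mul {f : ℂ → ℂ} {p : ℕ} (hp : 1 ≤ p)
    (hf : IsNormalizedPValent p f) (n : ℕ) :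
    Real.circleAverage (‖f ·‖) 0 (1 - (1 / 2) ^ (n + 1)) ≤
      meanBound p * (2 ^ (2 * p - 1)) ^ (n + 1) := by
  have hD := meanBound_pos p
  have hG := growthBound_pos p
  have two_le : (2 : ℝ) ≤ 2 ^ (2 * p - 1) := le_self_pow₀ (by norm_num) (by omega)
  induction n with
  | zero =>
    have hp' : (1 : ℝ) ≤ p := by exact_mod_cast hp
    calc _ ≤ growthBound p * (4 ^ p) ^ (0 + 1) :=
          circleAverage_norm_le (hf.differentiableOn.continuousOn.mono fun z hz => by
            rw [mem_ball_zero_iff, mem_sphere_zero_iff_norm.1 hz]; norm_num) (by norm_num)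
            fun z hz => hf.norm_le_growthBound_mul_four_pow 0 hz.le
      _ ≤ p * (growthBound p * 4 ^ p) := by
          rw [zero_add, pow_one]
          exact le_mul_of_one_le_left (by positivity) hp'
      _ ≤ meanBound p := by
          rw [meanBound, ← mul_assoc]
          linarith [show 0 ≤ p * growthBound p * 4 ^ p by positivity]
      _ ≤ _ := le_mul_of_one_le_right hD.le (one_le_pow₀ (by linarith))
  | succ n ih =>
    have step := hf.circleAverage_norm_succ_le hp n
    set Q : ℝ := (2 ^ (2 * p - 1)) ^ (n + 1)
    have one_le_Q : 1 ≤ Q := one_le_pow₀ (by linarith)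
    have error_le : p * growthBound p * 4 ^ p * Q + 1 / 4 ≤ meanBound p / 2 * Q := by
      rw [meanBound]
      linarith
    calc _ ≤ 4 / 3 * (meanBound p * Q + meanBound p / 2 * Q) := by linarith
      _ = meanBound p * (Q * 2) := by ring
      _ ≤ _ := by rw [pow_succ]; gcongr

/-! ### Coefficients -/

section Coefficients

variable {f : ℂ → ℂ} {a : ℕ → ℂ}

theorem hasFPowerSeriesAt_ofScalars
    (ha : ∀ z ∈ ball (0 : ℂ) 1, HasSum (fun k => a k * z ^ k) (f z)) :
    HasFPowerSeriesAt f (FormalMultilinearSeries.ofScalars ℂ a) 0 := by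
  rw [hasFPowerSeriesAt_iff]
  filter_upwards [ball_mem_nhds (0 : ℂ) one_pos] with z hz
  simpa [FormalMultilinearSeries.coeff_ofScalars, mul_comm] using ha z hz

theorem coeff_eq_of_hasFPowerSeriesAt
    (ha : ∀ z ∈ ball (0 : ℂ) 1, HasSum (fun k => a k * z ^ k) (f z))
    {P : FormalMultilinearSeries ℂ ℂ ℂ} (hP : HasFPowerSeriesAt f P 0) (k : ℕ) :
    a k = P.coeff k := by
  rw [← (hasFPowerSeriesAt_ofScalars ha).eq_formalMultilinearSeries hP,
    FormalMultilinearSeries.coeff_ofScalars]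

theorem iteratedDeriv_zero_eq_coeff_mul_factorial
    (ha : ∀ z ∈ ball (0 : ℂ) 1, HasSum (fun k => a k * z ^ k) (f z)) (k : ℕ) :
    iteratedDeriv k f 0 = a k * k ! := by
  rw [coeff_eq_of_hasFPowerSeriesAt ha
    (hasFPowerSeriesAt_ofScalars ha).analyticAt.hasFPowerSeriesAt,
    FormalMultilinearSeries.coeff_ofScalars,
    div_mul_cancel₀ _ (Nat.cast_ne_zero.2 k.factorial_ne_zero)]

theorem norm_coeff_le_circleAverage_norm_mul (hf : DifferentiableOn ℂ f (ball 0 1))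
    (ha : ∀ z ∈ ball (0 : ℂ) 1, HasSum (fun k => a k * z ^ k) (f z)) (k : ℕ) {r : ℝ} (hr : 0 < r)
    (hr1 : r < 1) : ‖a k‖ ≤ Real.circleAverage (‖f ·‖) 0 r * r⁻¹ ^ k := by
  have cauchy := DifferentiableOn.hasFPowerSeriesOnBall (R := ⟨r, hr.le⟩) (c := 0)
    (hf.mono (closedBall_subset_ball hr1)) hr
  rw [coeff_eq_of_hasFPowerSeriesAt ha cauchy.hasFPowerSeriesAt,
    ← FormalMultilinearSeries.norm_apply_eq_norm_coef]
  exact (norm_cauchyPowerSeries_le f 0 r k).trans_eq (by rw [abs_of_pos hr]; rfl)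

theorem IsNormalizedPValent.of_hasSum {p : ℕ} (hf : DifferentiableOn ℂ f (ball 0 1))
    (hp : PValentOn f (ball 0 1) p)
    (ha : ∀ z ∈ ball (0 : ℂ) 1, HasSum (fun k => a k * z ^ k) (f z)) (ha1 : ∀ i ≤ p, ‖a i‖ ≤ 1) :
    IsNormalizedPValent p f where
  differentiableOn := hf
  pValentOn := hp
  norm_iteratedDeriv_le i hi := by
    rw [iteratedDeriv_zero_eq_coeff_mul_factorial ha, norm_mul, norm_natCast]
    exact mul_le_of_le_one_left (by positivity) (ha1 i hi)

end Coefficients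

theorem exists_two_mul_le_two_pow_succ_le_four_mul {k : ℕ} (hk : k ≠ 0) :
    ∃ n : ℕ, (2 * k : ℝ) ≤ 2 ^ (n + 1) ∧ (2 : ℝ) ^ (n + 1) ≤ 4 * k := by
  refine ⟨Nat.log 2 k + 1, ?_, ?_⟩
  · exact_mod_cast (show 2 * k ≤ 2 ^ (Nat.log 2 k + 1 + 1) by
      have := Nat.lt_pow_succ_log_self one_lt_two k
      rw [pow_succ]; omega)
  · exact_mod_cast (show 2 ^ (Nat.log 2 k + 1 + 1) ≤ 4 * k by
      have := Nat.pow_log_le_self 2 hk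
      rw [pow_succ, pow_succ]; omega)

theorem inv_one_sub_pow_le_two {d : ℝ} {k : ℕ} (hd : d < 1) (hkd : k * d ≤ 1 / 2) :
    (1 - d)⁻¹ ^ k ≤ 2 := by
  have bernoulli := one_add_mul_le_pow (a := -d) (by linarith) k
  rw [← sub_eq_add_neg] at bernoulli
  rw [inv_pow, inv_le_comm₀ (pow_pos (by linarith) k) two_pos]
  linarith

/-- The constant `A_p` of the coefficient estimate. -/
def coeffBound (p : ℕ) : ℝ := meanBound p * 4 ^ (2 * p - 1) * 2

theorem coeffBound_pos (p : ℕ) : 0 < coeffBound p := by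
  have := meanBound_pos p
  unfold coeffBound
  positivity

theorem IsNormalizedPValent.norm_coeff_le {f : ℂ → ℂ} {a : ℕ → ℂ} {p : ℕ} (hp : 1 ≤ p)
    (hf : IsNormalizedPValent p f)
    (ha : ∀ z ∈ ball (0 : ℂ) 1, HasSum (fun k => a k * z ^ k) (f z)) {k : ℕ} (hk : k ≠ 0) :
    ‖a k‖ ≤ coeffBound p * (k : ℝ) ^ (2 * p - 1) := by
  have hD := meanBound_pos p
  obtain ⟨n, two_mul_le, le_four_mul⟩ := exists_two_mul_le_two_pow_succ_le_four_mul hk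
  set d : ℝ := (1 / 2) ^ (n + 1) with hd
  have hd0 : 0 < d := by positivity
  have hd1 : d ≤ 1 / 2 := half_pow_succ_le_half n
  have hkd : k * d ≤ 1 / 2 := by
    rw [hd, one_div_pow, mul_one_div, div_le_iff₀ (by positivity)]
    linarith
  have mean_le : Real.circleAverage (‖f ·‖) 0 (1 - d) ≤ meanBound p * (4 * k) ^ (2 * p - 1) := by
    refine (hf.circleAverage_norm_le_meanBound_mul hp n).trans ?_
    rw [pow_right_comm]
    gcongr
  calc ‖a k‖ ≤ Real.circleAverage (‖f ·‖) 0 (1 - d) * (1 - d)⁻¹ ^ k :=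
        norm_coeff_le_circleAverage_norm_mul hf.differentiableOn ha k (by linarith) (by linarith)
    _ ≤ meanBound p * (4 * k) ^ (2 * p - 1) * 2 :=
        mul_le_mul mean_le (inv_one_sub_pow_le_two (by linarith) hkd)
          (pow_nonneg (inv_nonneg.2 (by linarith)) k) (by positivity)
    _ = coeffBound p * (k : ℝ) ^ (2 * p - 1) := by
        rw [coeffBound, mul_pow]
        ring

theorem PValentOn.norm_coeff_le {f : ℂ → ℂ} {a : ℕ → ℂ} {p : ℕ} (hp : 1 ≤ p)
    (hpv : PValentOn f (ball 0 1) p) (hf : DifferentiableOn ℂ f (ball 0 1))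
    (ha : ∀ z ∈ ball (0 : ℂ) 1, HasSum (fun k => a k * z ^ k) (f z)) {m : ℝ} (hm : 0 < m)
    (ham : ∀ i ≤ p, ‖a i‖ ≤ m) {k : ℕ} (hk : k ≠ 0) :
    ‖a k‖ ≤ coeffBound p * m * (k : ℝ) ^ (2 * p - 1) := by
  have norm_m : ‖(m : ℂ)‖ = m := by rw [norm_real, Real.norm_of_nonneg hm.le]
  have hasSum_div : ∀ z ∈ ball (0 : ℂ) 1, HasSum (fun k => a k / m * z ^ k) (f z / m) :=
    fun z hz => by simpa only [div_mul_eq_mul_div] using (ha z hz).div_const (m : ℂ)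
  have normalized : IsNormalizedPValent p fun z => f z / m :=
    .of_hasSum (hf.div_const _) (hpv.div_const (ofReal_ne_zero.2 hm.ne')) hasSum_div fun i hi => by
      rw [norm_div, norm_m]
      exact div_le_one_of_le₀ (ham i hi) hm.le
  have bound := normalized.norm_coeff_le hp hasSum_div hk
  rwa [norm_div, norm_m, div_le_iff₀ hm, mul_right_comm] at bound

end

/-- Biernacki's theorem: for every `p ≥ 1` there is `A_p > 0` such that if
`f(z) = ∑ a_k z^k` is analytic and `p`-valent in the open unit disk, then for all `k ≥ p+1`,
`|a_k| ≤ A_p · (max_{0 ≤ i ≤ p} |a_i|) · k^{2p-1}`. -/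
theorem biernacki (p : ℕ) (hp : 1 ≤ p) :
    ∃ A : ℝ, 0 < A ∧
      ∀ (f : ℂ → ℂ) (a : ℕ → ℂ),
        AnalyticOnNhd ℂ f (ball 0 1) →
        PValentOn f (ball 0 1) p →
        (∀ z ∈ ball (0 : ℂ) 1, HasSum (fun k => a k * z ^ k) (f z)) →
        ∀ k : ℕ, p + 1 ≤ k →
          ‖a k‖ ≤ A * ((Finset.range (p + 1)).sup'
              (Finset.nonempty_range_iff.mpr (Nat.succ_ne_zero p)) fun i => ‖a i‖) *
            (k : ℝ) ^ (2 * p - 1) := by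
  refine ⟨coeffBound p, coeffBound_pos p, fun f a hf hpv ha k hk => ?_⟩
  set μ := (Finset.range (p + 1)).sup' _ fun i => ‖a i‖
  have norm_le_μ : ∀ i ≤ p, ‖a i‖ ≤ μ := fun i hi =>
    Finset.le_sup' (fun i => ‖a i‖) (Finset.mem_range_succ_iff.2 hi)
  have μ_nonneg : 0 ≤ μ := (norm_nonneg _).trans (norm_le_μ 0 p.zero_le)
  have bound : ∀ m > μ, ‖a k‖ ≤ coeffBound p * m * (k : ℝ) ^ (2 * p - 1) := fun m hm =>
    hpv.norm_coeff_le hp hf.differentiableOn ha (μ_nonneg.trans_lt hm)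
      (fun i hi => (norm_le_μ i hi).trans hm.le) (by omega)
  have cont : Continuous fun m : ℝ => coeffBound p * m * (k : ℝ) ^ (2 * p - 1) := by fun_prop
  exact ge_of_tendsto (cont.continuousWithinAt (s := Ioi μ) (x := μ))
    (eventually_mem_nhdsWithin.mono bound)
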